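/- arXiv:1402.0272 — 2 statements merged into one kernel-verified Lean document; each statement's English description precedes it below -/
import Mathlib

section
/- For all real numbers λ ∈ (1/2, 1) and ε ∈ (0, λ) there exists d₀ such that the following holds, where b := (1 − λ + ε)⁻¹: for every simple graph H with t vertices and average degree d ≥ d₀, every simple graph G with n ≥ (1+ε)·⌈√(log_b d)⌉·t vertices and minimum degree at least λn contains H as a minor. -/
/-!
Write `β = 1 - λ + ε`, so that `b = 1 / β`, let `d` be the average degree and `t` the number of vertices
of `H`, and `l = ⌈√(log_b d)⌉`. Branch sets of size about `l` suffice because two random `l`-sets in a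
graph of minimum degree `λ n` have no edge between them with probability roughly `(1 - λ) ^ (l ^ 2)`,
which is much smaller than `1 / d`, as `β ^ (l ^ 2) ≤ 1 / d` and `1 - λ < β`. Four ingredients turn
this into a proof. Fix `1 - λ < q < r < β` with `q < 1 / 2`.

* Reservoir (`exists_reservoir`). As `λ > 1 / 2`, any two vertices of `G` have linearly many common
  neighbours. An exponential moment bound for a random colouring with `k` colours yields a colour
  class `R` of size at most `n / k` that contains at least `η n` common neighbours of every pair.
* Branch sets (`random_sets`). In `U`, the complement of `R`, every vertex has at most `q |U|`
  non-neighbours. A uniformly random permutation of `U` cuts off `T = ⌊|U| / l⌋` disjoint `l`-tuples.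
  Sampling without replacement costs only a factor two (`perm_count`), so few tuples are
  disconnected (`count_disconn`) or have more than `r ^ l |U|` common non-neighbours (`count_bad`).
  All entries of a tuple that sends no edge to a given good tuple lie among the common non-neighbours
  of the latter, whence only `O(r ^ (l ^ 2) T ^ 2)` such pairs occur (`count_pair`). The bad tuples
  are discarded, and at least `t` tuples remain.
* Placement (`exists_placement`). A random injection of the vertices of `H` into the remaining tuples
  leaves at most `32 d t r ^ (l ^ 2) ≤ 32 t (r / β) ^ l ≤ η n` arcs of `H` without an edge between the
  corresponding tuples (`missing_le`).
* Repair (`isMinorOf_of_few_missing`). By Hall's theorem every such arc gets its own vertex of `R`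
  adjacent to both of its branch sets, and this vertex is added to the first of them.
-/

open SimpleGraph

/-- `H` is a minor of `G`: there is a minor model of `H` in `G`, i.e. pairwise disjoint
connected (nonempty) branch sets in `G`, one for each vertex of `H`, with an edge of `G`
between the branch sets of any two adjacent vertices of `H`.  Equivalently, a graph
isomorphic to `H` can be obtained from a subgraph of `G` by contracting edges. -/
def SimpleGraph.IsMinorOf {W V : Type*} (H : SimpleGraph W) (G : SimpleGraph V) : Prop :=
  ∃ B : W → Set V,
    (∀ w, (G.induce (B w)).Connected) ∧
    (Pairwise fun w₁ w₂ => Disjoint (B w₁) (B w₂)) ∧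
    ∀ ⦃w₁ w₂⦄, H.Adj w₁ w₂ → ∃ v₁ ∈ B w₁, ∃ v₂ ∈ B w₂, G.Adj v₁ v₂

/-- The average degree `2m/n` of a graph with `n` vertices and `m` edges. -/
noncomputable def SimpleGraph.averageDegree {V : Type*} (G : SimpleGraph V) : ℝ :=
  2 * G.edgeSet.ncard / Nat.card V

namespace HeartLemma

open Finset

/-! ### Sampling without replacement -/

open scoped Classical in
/-- Two injections into a finite type differ by a permutation of that type. -/
theorem exists_perm_comp {β γ : Type*} [Fintype β] [Fintype γ] (f g : γ → β)
    (hf : Function.Injective f) (hg : Function.Injective g) :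
    ∃ τ : Equiv.Perm β, τ ∘ f = g := by
  let e : {x // x ∈ Set.range f} ≃ {x // x ∈ Set.range g} :=
    (Equiv.ofInjective f hf).symm.trans (Equiv.ofInjective g hg)
  refine ⟨e.extendSubtype, ?_⟩
  funext c
  have := e.extendSubtype_apply_of_mem (f c) ⟨c, rfl⟩
  simp only [Function.comp]
  rw [this]
  simp [e]

open scoped Classical in
/-- A uniformly random permutation sends the injective tuple `p` to any prescribed tuple `g` with
probability at most `1 / n.descFactorial k`, because all injective `g` are equally likely. -/
theorem card_fiber_mul {β γ : Type*} [Fintype β] [Fintype γ] (p g : γ → β)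
    (hp : Function.Injective p) :
    #{σ : Equiv.Perm β | σ ∘ p = g} * (Fintype.card β).descFactorial (Fintype.card γ)
      ≤ (Fintype.card β).factorial := by
  by_cases hg : Function.Injective g
  swap
  · have : #{σ : Equiv.Perm β | σ ∘ p = g} = 0 := by
      rw [Finset.card_eq_zero, Finset.filter_eq_empty_iff]
      rintro σ - rfl
      exact hg (σ.injective.comp hp)
    simp [this]
  have key : ∀ g' : γ ↪ β, #{σ : Equiv.Perm β | σ ∘ p = g'} = #{σ : Equiv.Perm β | σ ∘ p = g} := by
    intro g'
    obtain ⟨τ, hτ⟩ := exists_perm_comp g g' hg g'.injective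
    symm
    refine Finset.card_bij (fun σ _ => τ * σ) ?_ ?_ ?_
    · intro σ h
      simp only [mem_filter, mem_univ, true_and] at h ⊢
      rw [← hτ, ← h]; rfl
    · intro a _ b _ h
      simpa using h
    · intro σ h
      simp only [mem_filter, mem_univ, true_and] at h ⊢
      refine ⟨τ⁻¹ * σ, ?_, by simp⟩
      rw [← hτ] at h
      funext c
      have := congrFun h c
      simp only [Function.comp] at this
      simp [this]
  have h1 : ∑ g' : γ ↪ β, #{σ : Equiv.Perm β | σ ∘ p = g'} ≤ (Fintype.card β).factorial := by
    rw [← Fintype.card_perm, ← Finset.card_univ, ← Finset.card_biUnion]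
    · exact Finset.card_le_card (Finset.subset_univ _)
    · intro a _ b _ hab
      rw [Function.onFun, Finset.disjoint_left]
      intro σ h h'
      simp only [mem_filter, mem_univ, true_and] at h h'
      exact hab (DFunLike.coe_injective (h.symm.trans h'))
  simp_rw [key] at h1
  rw [Finset.sum_const, Finset.card_univ, Fintype.card_embedding_eq, smul_eq_mul] at h1
  linarith

/-- Sampling `k` points of `n` with or without repetition gives nearly the same number of outcomes
when `k ^ 2` is small compared with `n`; the proof is Bernoulli's inequality for `(1 - k / n) ^ k`. -/
theorem pow_le_two_mul_descFactorial (n k : ℕ) (h : 2 * k ^ 2 ≤ n) :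
    (n : ℝ) ^ k ≤ 2 * n.descFactorial k := by
  rcases Nat.eq_zero_or_pos n with rfl | hn
  · have : k = 0 := by nlinarith
    subst this; simp
  have hk : k ≤ n := by nlinarith
  have hn' : (0:ℝ) < n := by exact_mod_cast hn
  have h1 : ((n : ℝ) - k) ^ k ≤ n.descFactorial k := by
    have := Nat.pow_sub_le_descFactorial n k
    have h2 : (n - k) ^ k ≤ n.descFactorial k :=
      (Nat.pow_le_pow_left (by omega) k).trans this
    have h3 : (((n - k : ℕ) : ℝ)) ^ k ≤ n.descFactorial k := by exact_mod_cast h2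
    rwa [Nat.cast_sub hk] at h3
  have h2 : 1 + (k : ℝ) * (-(k / n)) ≤ (1 + -((k : ℝ) / n)) ^ k :=
    one_add_mul_le_pow (by
      have : (k : ℝ) / n ≤ 1 := by rw [div_le_one hn']; exact_mod_cast hk
      linarith) k
  have h3 : (k : ℝ) * (k / n) ≤ 1 / 2 := by
    rw [← mul_div_assoc, div_le_iff₀ hn']
    have : (2 : ℝ) * k ^ 2 ≤ n := by exact_mod_cast h
    linarith
  have h4 : ((n : ℝ) - k) ^ k = n ^ k * (1 + -((k : ℝ) / n)) ^ k := by
    rw [← mul_pow]; congr 1; field_simp; ring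
  rw [h4] at h1
  have h5 : (0 : ℝ) < (n : ℝ) ^ k := by positivity
  nlinarith

open scoped Classical in
/-- Replacing independent sampling by sampling without replacement at most doubles probabilities:
the event `E` evaluated on the image of the fixed positions `p` under a uniformly random permutation
is at most twice as likely as `E` evaluated on an independent uniform tuple. -/
theorem perm_count {β γ : Type*} [Fintype β] [Fintype γ] [DecidableEq γ] (p : γ → β)
    (hp : Function.Injective p) (E : (γ → β) → Prop)
    (h : 2 * Fintype.card γ ^ 2 ≤ Fintype.card β) :
    (#{σ : Equiv.Perm β | E (σ ∘ p)} : ℝ) * (Fintype.card β : ℝ) ^ Fintype.card γ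
      ≤ 2 * #{g : γ → β | E g} * (Fintype.card β).factorial := by
  have h0 : ({σ : Equiv.Perm β | E (σ ∘ p)} : Finset _) =
      ({g : γ → β | E g} : Finset _).biUnion fun g => {σ : Equiv.Perm β | σ ∘ p = g} := by
    ext σ; simp
  have h1 : #{σ : Equiv.Perm β | E (σ ∘ p)} * (Fintype.card β).descFactorial (Fintype.card γ)
      ≤ #{g : γ → β | E g} * (Fintype.card β).factorial := by
    calc _ ≤ (∑ g ∈ ({g : γ → β | E g} : Finset _), #{σ : Equiv.Perm β | σ ∘ p = g}) *
          (Fintype.card β).descFactorial (Fintype.card γ) := by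
            rw [h0]; exact Nat.mul_le_mul_right _ Finset.card_biUnion_le
      _ = ∑ g ∈ ({g : γ → β | E g} : Finset _), #{σ : Equiv.Perm β | σ ∘ p = g} *
          (Fintype.card β).descFactorial (Fintype.card γ) := Finset.sum_mul ..
      _ ≤ ∑ g ∈ ({g : γ → β | E g} : Finset _), (Fintype.card β).factorial :=
          Finset.sum_le_sum fun g _ => card_fiber_mul p g hp
      _ = _ := by simp
  have h1' : (#{σ : Equiv.Perm β | E (σ ∘ p)} : ℝ) *
      (Fintype.card β).descFactorial (Fintype.card γ)
      ≤ #{g : γ → β | E g} * (Fintype.card β).factorial := by exact_mod_cast h1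
  have h2 := pow_le_two_mul_descFactorial _ _ h
  calc _ ≤ (#{σ : Equiv.Perm β | E (σ ∘ p)} : ℝ) *
        (2 * (Fintype.card β).descFactorial (Fintype.card γ)) := by gcongr
    _ ≤ _ := by linarith

/-! ### Random tuples -/

open scoped Classical in
/-- The common non-neighbours of the tuple `x`: the vertices adjacent to no `x k`. A vertex is a
non-neighbour of itself, so entries of `x` may occur among them. -/
noncomputable def nonNbrs {U ι : Type*} [Fintype U] (G : SimpleGraph U) (x : ι → U) : Finset U :=
  {u | ∀ k, ¬ G.Adj (x k) u}

open scoped Classical in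
/-- Few `l`-tuples have more than `r ^ l * |U|` common non-neighbours. On average a random tuple has
at most `q ^ l * |U|` of them, so this is Markov's inequality. -/
theorem count_bad {U : Type*} [Fintype U] [Nonempty U] (G : SimpleGraph U) (q r : ℝ)
    (hM : ∀ v, (#{u | ¬ G.Adj v u} : ℝ) ≤ q * Fintype.card U) (l : ℕ) :
    (#{x : Fin l → U | r ^ l * Fintype.card U < #(nonNbrs G x)} : ℝ) * r ^ l
      ≤ (q * Fintype.card U) ^ l := by
  have hN : (0:ℝ) < Fintype.card U := by exact_mod_cast Fintype.card_pos
  have h1 : ∑ x : Fin l → U, #(nonNbrs G x) = ∑ u : U, #({x : Fin l → U | ∀ k, ¬ G.Adj (x k) u} : Finset (Fin l → U)) := by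
    simp only [nonNbrs, Finset.card_filter]
    rw [Finset.sum_comm]
    congr!
  have h2 : ∀ u : U, (#{x : Fin l → U | ∀ k, ¬ G.Adj (x k) u} : ℝ) ≤ (q * Fintype.card U) ^ l := by
    intro u
    have : ({x : Fin l → U | ∀ k, ¬ G.Adj (x k) u} : Finset _)
        = Fintype.piFinset fun _ : Fin l => ({v | ¬ G.Adj u v} : Finset U) := by
      ext x; simp [Fintype.mem_piFinset, G.adj_comm]
    rw [this, Fintype.card_piFinset_const]
    push_cast
    exact pow_le_pow_left₀ (by positivity) (hM u) l
  have h3 : (∑ x : Fin l → U, (#(nonNbrs G x) : ℝ)) ≤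
      Fintype.card U * (q * Fintype.card U) ^ l := by
    have : (∑ x : Fin l → U, (#(nonNbrs G x) : ℝ)) =
      ∑ u : U, (#{x : Fin l → U | ∀ k, ¬ G.Adj (x k) u} : ℝ) := by exact_mod_cast h1
    rw [this]
    refine (Finset.sum_le_sum fun u _ => h2 u).trans ?_
    simp
  have h4 : (#{x : Fin l → U | r ^ l * Fintype.card U < #(nonNbrs G x)} : ℝ) *
      (r ^ l * Fintype.card U) ≤ ∑ x : Fin l → U, (#(nonNbrs G x) : ℝ) := by
    rw [← nsmul_eq_mul]
    refine (Finset.card_nsmul_le_sum _ _ _ fun x hx => ?_).trans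
      (Finset.sum_le_sum_of_subset_of_nonneg (Finset.filter_subset _ _) fun _ _ _ => by positivity)
    exact (Finset.mem_filter.1 hx).2.le
  have h5 := h4.trans h3
  rw [← mul_assoc, mul_comm] at h5
  exact le_of_mul_le_mul_left h5 hN

open scoped Classical in
/-- Once the first tuple has at most `r ^ l * |U|` common non-neighbours, all `l` entries of the second
tuple must be chosen among these, which happens with probability at most `r ^ (l ^ 2)`. -/
theorem count_pair {U : Type*} [Fintype U] (G : SimpleGraph U) (r : ℝ) (hr : 0 ≤ r) (l : ℕ) :
    (#{g : Fin l ⊕ Fin l → U | (#(nonNbrs G (g ∘ Sum.inl)) : ℝ) ≤ r ^ l * Fintype.card U ∧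
        ∀ k m, ¬ G.Adj (g (Sum.inl k)) (g (Sum.inr m))} : ℝ)
      ≤ r ^ l ^ 2 * (Fintype.card U : ℝ) ^ (l + l) := by
  set S : Finset (Fin l ⊕ Fin l → U) :=
    {g : Fin l ⊕ Fin l → U | (#(nonNbrs G (g ∘ Sum.inl)) : ℝ) ≤ r ^ l * Fintype.card U ∧
        ∀ k m, ¬ G.Adj (g (Sum.inl k)) (g (Sum.inr m))} with hS
  have h1 : #S = ∑ x : Fin l → U, #{g ∈ S | g ∘ Sum.inl = x} :=
    Finset.card_eq_sum_card_fiberwise (fun _ _ => Finset.mem_coe.2 (Finset.mem_univ _))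
  have h2 : ∀ x : Fin l → U, (#{g ∈ S | g ∘ Sum.inl = x} : ℝ) ≤ (r ^ l * Fintype.card U) ^ l := by
    intro x
    by_cases hx : (#(nonNbrs G x) : ℝ) ≤ r ^ l * Fintype.card U
    · have : #{g ∈ S | g ∘ Sum.inl = x} ≤ #(Fintype.piFinset fun _ : Fin l => nonNbrs G x) := by
        refine Finset.card_le_card_of_injOn (fun g => g ∘ Sum.inr) ?_ ?_
        · intro g hg
          simp only [hS, coe_filter, mem_filter, mem_univ, true_and, Set.mem_ofPred_eq] at hg
          obtain ⟨⟨-, h⟩, rfl⟩ := hg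
          simp only [mem_coe, nonNbrs, mem_filter, mem_univ, true_and, Fintype.mem_piFinset]
          intro m k
          exact h k m
        · intro g hg g' hg' h
          simp only [coe_filter, Set.mem_ofPred_eq] at hg hg'
          funext s
          rcases s with s | s
          · exact congrFun (hg.2.trans hg'.2.symm) s
          · exact congrFun h s
      rw [Fintype.card_piFinset_const] at this
      calc (#{g ∈ S | g ∘ Sum.inl = x} : ℝ) ≤ ((#(nonNbrs G x) ^ l : ℕ) : ℝ) := by exact_mod_cast this
        _ ≤ _ := by push_cast; exact pow_le_pow_left₀ (by positivity) hx l
    · have : #{g ∈ S | g ∘ Sum.inl = x} = 0 := by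
        rw [Finset.card_eq_zero, Finset.filter_eq_empty_iff]
        rintro g hg rfl
        exact hx (Finset.mem_filter.1 hg).2.1
      rw [this]; simp; positivity
  rw [h1]
  push_cast
  refine (Finset.sum_le_sum fun x _ => h2 x).trans (le_of_eq ?_)
  simp
  ring

/-- A sufficient condition for the entries of `x` to induce a connected graph: some entry `x z` has,
with every other entry, a common neighbour that is again an entry of `x`. -/
def Starry {U : Type*} (G : SimpleGraph U) {l : ℕ} (x : Fin l → U) : Prop :=
  ∃ z : Fin l, ∀ j, j ≠ z → ∃ k, G.Adj (x z) (x k) ∧ G.Adj (x j) (x k)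

theorem Starry.connected {U : Type*} {G : SimpleGraph U} {l : ℕ} {x : Fin l → U}
    (h : Starry G x) : (G.induce (Set.range x)).Connected := by
  obtain ⟨z, hz⟩ := h
  rw [SimpleGraph.connected_iff_exists_forall_reachable]
  refine ⟨⟨x z, z, rfl⟩, ?_⟩
  rintro ⟨_, j, rfl⟩
  by_cases hj : j = z
  · subst hj; rfl
  obtain ⟨k, h1, h2⟩ := hz j hj
  have a1 : (G.induce (Set.range x)).Adj ⟨x z, z, rfl⟩ ⟨x k, k, rfl⟩ := h1
  have a2 : (G.induce (Set.range x)).Adj ⟨x k, k, rfl⟩ ⟨x j, j, rfl⟩ := h2.symm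
  exact a1.reachable.trans a2.reachable

open scoped Classical in
/-- Few `l`-tuples fail to be `Starry`. Fix the centre `z = 0`; for each other index `j` the remaining
`l - 2` entries must all avoid the common neighbours of `x z` and `x j`, which make up a proportion of
at least `1 - 2 * q` of all vertices. -/
theorem count_disconn {U : Type*} [Fintype U] (G : SimpleGraph U) (q : ℝ)
    (hM : ∀ v, (#{u | ¬ G.Adj v u} : ℝ) ≤ q * Fintype.card U) (l : ℕ) (hl : 0 < l) :
    (#{x : Fin l → U | ¬ Starry G x} : ℝ) ≤ l * (2 * q) ^ (l - 2) * (Fintype.card U : ℝ) ^ l := by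
  let z : Fin l := ⟨0, hl⟩
  have hsub : ({x : Fin l → U | ¬ Starry G x} : Finset _) ⊆
      ({j | j ≠ z} : Finset (Fin l)).biUnion fun j =>
        {x : Fin l → U | ∀ k, ¬ (G.Adj (x z) (x k) ∧ G.Adj (x j) (x k))} := by
    intro x hx
    simp only [mem_filter, mem_univ, true_and, Starry, not_exists, not_forall] at hx
    obtain ⟨j, hj, h⟩ := hx z
    simp only [mem_biUnion, mem_filter, mem_univ, true_and]
    exact ⟨j, hj, h⟩
  have hj : ∀ j : Fin l, j ≠ z →
      (#{x : Fin l → U | ∀ k, ¬ (G.Adj (x z) (x k) ∧ G.Adj (x j) (x k))} : ℝ) ≤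
        (2 * q) ^ (l - 2) * (Fintype.card U : ℝ) ^ l := by
    intro j hj
    set S : Finset (Fin l → U) :=
      {x : Fin l → U | ∀ k, ¬ (G.Adj (x z) (x k) ∧ G.Adj (x j) (x k))} with hS
    have h1 : #S = ∑ a : U × U, #{x ∈ S | (x z, x j) = a} :=
      Finset.card_eq_sum_card_fiberwise (fun _ _ => Finset.mem_coe.2 (Finset.mem_univ _))
    have h2 : ∀ a : U × U, (#{x ∈ S | (x z, x j) = a} : ℝ) ≤
        (2 * q * Fintype.card U) ^ (l - 2) := by
      rintro ⟨a, b⟩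
      let D : Finset U := {u | ¬ (G.Adj a u ∧ G.Adj b u)}
      have hD : (#D : ℝ) ≤ 2 * q * Fintype.card U := by
        have : D ⊆ ({u | ¬ G.Adj a u} : Finset U) ∪ ({u | ¬ G.Adj b u} : Finset U) := by
          intro u hu
          simp only [D, mem_filter, mem_univ, true_and, mem_union] at hu ⊢
          tauto
        have h3 : (#D : ℝ) ≤ #({u | ¬ G.Adj a u} : Finset U) + #({u | ¬ G.Adj b u} : Finset U) := by
          exact_mod_cast (Finset.card_le_card this).trans (Finset.card_union_le _ _)
        linarith [hM a, hM b]
      have h4 : {x ∈ S | (x z, x j) = (a, b)} ⊆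
          Fintype.piFinset fun k => if k = z then {a} else if k = j then {b} else D := by
        intro x hx
        simp only [hS, mem_filter, mem_univ, true_and, Prod.mk.injEq] at hx
        obtain ⟨hx, rfl, rfl⟩ := hx
        rw [Fintype.mem_piFinset]
        intro k
        split_ifs with c1 c2
        · simp [c1]
        · simp [c2]
        · simpa [D] using hx k
      have h5 : #(Fintype.piFinset fun k : Fin l => if k = z then {a} else if k = j then {b} else D)
          = #D ^ (l - 2) := by
        rw [Fintype.card_piFinset]
        have : ∀ k : Fin l, #(if k = z then {a} else if k = j then {b} else D) =
            if k ∈ ({z, j} : Finset (Fin l)) then 1 else #D := by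
          intro k
          simp only [mem_insert, mem_singleton]
          split_ifs <;> simp_all
        simp_rw [this]
        rw [Finset.prod_ite, Finset.prod_const_one, one_mul, Finset.prod_const]
        congr 1
        have e : ({x | x ∉ ({z, j} : Finset (Fin l))} : Finset (Fin l)) = ({z, j} : Finset (Fin l))ᶜ := by
          ext; simp
        rw [e, Finset.card_compl, Finset.card_pair (Ne.symm hj), Fintype.card_fin]
      have h6 := Finset.card_le_card h4
      rw [h5] at h6
      calc (#{x ∈ S | (x z, x j) = (a, b)} : ℝ) ≤ (#D : ℝ) ^ (l - 2) := by exact_mod_cast h6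
        _ ≤ _ := pow_le_pow_left₀ (by positivity) hD _
    have hl2 : 2 ≤ l := by
      have := j.2
      have : (j : ℕ) ≠ 0 := fun h => hj (Fin.ext h)
      omega
    rw [h1]
    push_cast
    refine (Finset.sum_le_sum fun x _ => h2 x).trans (le_of_eq ?_)
    -- `|U| ^ 2` choices for the entries at `z` and `j`, recombined with the power `l - 2`
    obtain ⟨m, rfl⟩ := Nat.exists_eq_add_of_le hl2
    simp
    ring
  calc (#{x : Fin l → U | ¬ Starry G x} : ℝ) ≤
      ∑ j ∈ ({j | j ≠ z} : Finset (Fin l)),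
        (#{x : Fin l → U | ∀ k, ¬ (G.Adj (x z) (x k) ∧ G.Adj (x j) (x k))} : ℝ) := by
        exact_mod_cast (Finset.card_le_card hsub).trans Finset.card_biUnion_le
    _ ≤ ∑ j ∈ ({j | j ≠ z} : Finset (Fin l)), (2 * q) ^ (l - 2) * (Fintype.card U : ℝ) ^ l :=
        Finset.sum_le_sum fun j h => hj j (Finset.mem_filter.1 h).2
    _ ≤ _ := by
      rw [Finset.sum_const, nsmul_eq_mul, mul_assoc]
      have hq : 0 ≤ (2 * q) ^ (l - 2) * (Fintype.card U : ℝ) ^ l := by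
        rcases isEmpty_or_nonempty U with hU | ⟨⟨u⟩⟩
        · have : (Fintype.card U : ℝ) = 0 := by simp
          rw [this, zero_pow hl.ne']; simp
        · have h1 := hM u
          have hN : (0:ℝ) < Fintype.card U := by
            have : 0 < Fintype.card U := Fintype.card_pos_iff.2 ⟨u⟩
            exact_mod_cast this
          have : 0 ≤ q := by
            by_contra hq
            have h2 : (0:ℝ) ≤ #{w | ¬ G.Adj u w} := by positivity
            nlinarith
          positivity
      have : (#({j | j ≠ z} : Finset (Fin l)) : ℝ) ≤ l := by
        have := Finset.card_le_univ ({j | j ≠ z} : Finset (Fin l))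
        rw [Fintype.card_fin] at this
        exact_mod_cast this
      gcongr

/-! ### Disjoint branch sets -/

open scoped Classical in
/-- A graph in which every vertex has at most `q * |U|` non-neighbours contains `T` disjoint
`l`-tuples, all but a proportion `γ` of them (those outside `I`) connected, such that only
`O(r ^ (l ^ 2) * T ^ 2)` ordered pairs starting in `I` have no edge between them. The tuples are cut
off from a uniformly random permutation of the vertices. -/
theorem random_sets {U : Type*} [Fintype U] [Nonempty U] (G : SimpleGraph U) (q r γ : ℝ)
    (hr : 0 < r)
    (hM : ∀ v, (#{u | ¬ G.Adj v u} : ℝ) ≤ q * Fintype.card U) (l : ℕ) (hl : 0 < l)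
    (hN : 8 * l ^ 2 ≤ Fintype.card U) (hγ : 0 < γ)
    (hp : (q / r) ^ l + l * (2 * q) ^ (l - 2) ≤ γ / 4) (T : ℕ) (hT : 0 < T)
    (hTl : T * l ≤ Fintype.card U) :
    ∃ (x : Fin T → Fin l → U) (I : Finset (Fin T)),
      (∀ i k j m, x i k = x j m → i = j) ∧ (1 - γ) * T ≤ #I ∧
      (∀ i ∈ I, (G.induce (Set.range (x i))).Connected) ∧
      (#{p : Fin T × Fin T | p.1 ∈ I ∧ p.1 ≠ p.2 ∧ ∀ k m, ¬ G.Adj (x p.1 k) (x p.2 m)} : ℝ)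
        ≤ 4 * r ^ l ^ 2 * T ^ 2 := by
  have hN0 : (0:ℝ) < Fintype.card U := by exact_mod_cast Fintype.card_pos
  have hT0 : (0:ℝ) < T := by exact_mod_cast hT
  obtain ⟨a⟩ : Nonempty (Fin T × Fin l ↪ U) := by
    apply Function.Embedding.nonempty_of_card_le; simpa using hTl
  -- Bad tuples, and bad pairs of tuples, as abstract predicates: this pins down one decidability
  -- instance for each of them.
  obtain ⟨Bd, hBdd⟩ : ∃ P : (Fin l → U) → Prop, ∀ x, P x ↔
      (r ^ l * Fintype.card U < #(nonNbrs G x) ∨ ¬ Starry G x) := ⟨_, fun _ => Iff.rfl⟩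
  obtain ⟨Pr, hPr⟩ : ∃ P : (Fin l ⊕ Fin l → U) → Prop, ∀ g, P g ↔
      ((#(nonNbrs G (g ∘ Sum.inl)) : ℝ) ≤ r ^ l * Fintype.card U ∧
        ∀ k m, ¬ G.Adj (g (Sum.inl k)) (g (Sum.inr m))) := ⟨_, fun _ => Iff.rfl⟩
  let bad : Equiv.Perm U → Finset (Fin T) := fun σ => {i | Bd fun k => σ (a (i, k))}
  let prs : Equiv.Perm U → Finset (Fin T × Fin T) := fun σ =>
    {p | p.1 ≠ p.2 ∧ Pr (σ ∘ Sum.elim (fun k => a (p.1, k)) (fun k => a (p.2, k)))}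
  set nf : ℝ := ((Fintype.card U).factorial : ℝ) with hn
  have hn0 : 0 < nf := by rw [hn]; exact_mod_cast Nat.factorial_pos _
  have hBd : (#{x : Fin l → U | Bd x} : ℝ) ≤ γ / 4 * (Fintype.card U : ℝ) ^ l := by
    have h1 : (#{x : Fin l → U | Bd x} : ℝ) ≤
        #{x : Fin l → U | r ^ l * Fintype.card U < #(nonNbrs G x)}
          + #{x : Fin l → U | ¬ Starry G x} := by
      have : #{x : Fin l → U | Bd x} ≤ #{x : Fin l → U | r ^ l * Fintype.card U < #(nonNbrs G x)}
          + #{x : Fin l → U | ¬ Starry G x} := by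
        refine (Finset.card_le_card fun x hx => ?_).trans (Finset.card_union_le _ _)
        simpa [hBdd] using hx
      exact_mod_cast this
    have h2 := count_bad G q r hM l
    have h3 := count_disconn G q hM l hl
    have h4 : (#{x : Fin l → U | r ^ l * Fintype.card U < #(nonNbrs G x)} : ℝ) ≤
        (q / r) ^ l * (Fintype.card U : ℝ) ^ l := by
      rw [div_pow, div_mul_eq_mul_div, ← mul_pow, le_div_iff₀ (by positivity)]
      exact h2
    have h5 : (0:ℝ) < (Fintype.card U : ℝ) ^ l := by positivity
    nlinarith
  have hb : ∀ i : Fin T, (#{σ : Equiv.Perm U | Bd fun k => σ (a (i, k))} : ℝ) ≤ γ / 2 * nf := by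
    intro i
    have h1 := perm_count (fun k : Fin l => a (i, k))
      (fun k k' h => by simpa using a.injective h) Bd (by rw [Fintype.card_fin]; omega)
    rw [Fintype.card_fin] at h1
    have h5 : (0:ℝ) < (Fintype.card U : ℝ) ^ l := by positivity
    rw [← hn] at h1
    refine le_of_mul_le_mul_right (h1.trans ?_) h5
    nlinarith
  have hq : ∀ i j : Fin T, i ≠ j → (#{σ : Equiv.Perm U |
      Pr (σ ∘ Sum.elim (fun k => a (i, k)) (fun k => a (j, k)))} : ℝ) ≤ 2 * r ^ l ^ 2 * nf := by
    intro i j hij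
    have h1 := perm_count (Sum.elim (fun k : Fin l => a (i, k)) (fun k : Fin l => a (j, k)))
      (by
        rintro (k | k) (m | m) h <;> have := a.injective h <;> simp_all) Pr
      (by rw [Fintype.card_sum, Fintype.card_fin]; nlinarith)
    rw [Fintype.card_sum, Fintype.card_fin] at h1
    have h2 := count_pair G r hr.le l
    have h5 : (0:ℝ) < (Fintype.card U : ℝ) ^ (l + l) := by positivity
    refine le_of_mul_le_mul_right (le_trans (le_of_eq (by congr!)) (h1.trans ?_)) h5
    have h6 : (#{g : Fin l ⊕ Fin l → U | Pr g} : ℝ) ≤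
      r ^ l ^ 2 * (Fintype.card U : ℝ) ^ (l + l) := by
      convert h2 using 4
      exact hPr _
    nlinarith
  have sb : ∑ σ, (#(bad σ) : ℝ) ≤ T * (γ / 2 * nf) := by
    have : ∑ σ, #(bad σ) = ∑ i, #{σ : Equiv.Perm U | Bd fun k => σ (a (i, k))} := by
      simp only [bad, Finset.card_filter]
      exact Finset.sum_comm
    have h2 : ∑ σ, (#(bad σ) : ℝ) = ∑ i, (#{σ : Equiv.Perm U | Bd fun k => σ (a (i, k))} : ℝ) := by
      exact_mod_cast this
    rw [h2]
    refine (Finset.sum_le_sum fun i _ => hb i).trans ?_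
    simp
  have sp : ∑ σ, (#(prs σ) : ℝ) ≤ T ^ 2 * (2 * r ^ l ^ 2 * nf) := by
    have : ∑ σ, #(prs σ) = ∑ p : Fin T × Fin T, #{σ : Equiv.Perm U | p.1 ≠ p.2 ∧
        Pr (σ ∘ Sum.elim (fun k => a (p.1, k)) (fun k => a (p.2, k)))} := by
      simp only [prs, Finset.card_filter]
      exact Finset.sum_comm
    have h2 : ∑ σ, (#(prs σ) : ℝ) = ∑ p : Fin T × Fin T, (#{σ : Equiv.Perm U | p.1 ≠ p.2 ∧
        Pr (σ ∘ Sum.elim (fun k => a (p.1, k)) (fun k => a (p.2, k)))} : ℝ) := by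
      exact_mod_cast this
    rw [h2]
    have h3 : ∀ p : Fin T × Fin T, (#{σ : Equiv.Perm U | p.1 ≠ p.2 ∧
        Pr (σ ∘ Sum.elim (fun k => a (p.1, k)) (fun k => a (p.2, k)))} : ℝ)
        ≤ 2 * r ^ l ^ 2 * nf := by
      intro p
      by_cases hp : p.1 = p.2
      · simp only [hp, ne_eq, not_true_eq_false, false_and, filter_false, card_empty]
        simp; positivity
      · simpa [hp] using hq p.1 p.2 hp
    refine (Finset.sum_le_sum fun i _ => h3 i).trans ?_
    rw [Finset.sum_const, Finset.card_univ, Fintype.card_prod, Fintype.card_fin, nsmul_eq_mul]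
    push_cast
    rw [pow_two (T : ℝ)]
  have hrho : 0 < r ^ l ^ 2 := by positivity
  -- One permutation has to be good for both counts at once, so the first moment method is applied to
  -- a sum of the two counts, weighted so that each contributes at most half of the bound.
  obtain ⟨σ, -, hσ⟩ : ∃ σ ∈ (Finset.univ : Finset (Equiv.Perm U)),
      4 * r ^ l ^ 2 / γ * T * #(bad σ) + #(prs σ) ≤ 4 * r ^ l ^ 2 * T ^ 2 := by
    apply Finset.exists_le_of_sum_le Finset.univ_nonempty
    rw [Finset.sum_add_distrib, ← Finset.mul_sum, Finset.sum_const, Finset.card_univ,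
      Fintype.card_perm, nsmul_eq_mul, ← hn]
    have : 4 * r ^ l ^ 2 / γ * T * ∑ σ, (#(bad σ) : ℝ) ≤
        4 * r ^ l ^ 2 / γ * T * (T * (γ / 2 * nf)) := by gcongr
    have e : 4 * r ^ l ^ 2 / γ * T * (T * (γ / 2 * nf)) = 2 * r ^ l ^ 2 * T ^ 2 * nf := by
      field_simp; ring
    linarith
  have hbσ : (#(bad σ) : ℝ) ≤ γ * T := by
    have h0 : (0:ℝ) ≤ #(prs σ) := by positivity
    have : 4 * r ^ l ^ 2 / γ * T * #(bad σ) ≤ 4 * r ^ l ^ 2 / γ * T * (γ * T) := by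
      have e : 4 * r ^ l ^ 2 / γ * T * (γ * T) = 4 * r ^ l ^ 2 * T ^ 2 := by field_simp
      linarith
    exact le_of_mul_le_mul_left this (by positivity)
  have hpσ : (#(prs σ) : ℝ) ≤ 4 * r ^ l ^ 2 * T ^ 2 := by
    have : 0 ≤ 4 * r ^ l ^ 2 / γ * T * #(bad σ) := by positivity
    linarith
  refine ⟨fun i k => σ (a (i, k)), (bad σ)ᶜ, ?_, ?_, ?_, ?_⟩
  · intro i k j m h
    have := a.injective (σ.injective h)
    simp_all
  · have := Finset.card_add_card_compl (bad σ)
    rw [Fintype.card_fin] at this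
    have h2 : (#(bad σ) : ℝ) + #(bad σ)ᶜ = T := by exact_mod_cast this
    linarith
  · intro i hi
    simp only [bad, mem_compl, mem_filter, mem_univ, true_and, hBdd, not_or, not_not] at hi
    exact hi.2.connected
  · refine le_trans ?_ hpσ
    norm_cast
    apply Finset.card_le_card
    intro p hp
    simp only [bad, mem_compl, mem_filter, mem_univ, true_and, hBdd, not_or, not_not, not_lt] at hp
    simp only [prs, hPr, mem_filter, mem_univ, true_and]
    exact ⟨hp.2.1, hp.1.1, hp.2.2⟩

/-! ### Placing the vertices of `H` -/

open scoped Classical in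
/-- Under a uniformly random injection of the vertices of `H` into `ι`, each arc of `H` lands on a
`B`-related pair with probability at most twice the density of such pairs; some injection does no
worse than the average. -/
theorem exists_placement {W ι : Type*} [Fintype W] [Fintype ι] (H : SimpleGraph W)
    (B : ι → ι → Prop) (hW : Fintype.card W ≤ Fintype.card ι) (h8 : 8 ≤ Fintype.card ι) :
    ∃ f : W → ι, Function.Injective f ∧
      (#{p : W × W | H.Adj p.1 p.2 ∧ B (f p.1) (f p.2)} : ℝ) * (Fintype.card ι : ℝ) ^ 2 ≤
        2 * #{p : W × W | H.Adj p.1 p.2} * #{p : ι × ι | p.1 ≠ p.2 ∧ B p.1 p.2} := by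
  obtain ⟨a⟩ := Function.Embedding.nonempty_of_card_le hW
  have hι : (0:ℝ) < Fintype.card ι := by
    have : 0 < Fintype.card ι := by omega
    exact_mod_cast this
  set nf : ℝ := ((Fintype.card ι).factorial : ℝ) with hn
  have hn0 : 0 < nf := by rw [hn]; exact_mod_cast Nat.factorial_pos _
  -- `perm_count` is applied with tuples of length two.
  obtain ⟨E, hE⟩ : ∃ E : (Fin 2 → ι) → Prop, ∀ g, E g ↔ (g 0 ≠ g 1 ∧ B (g 0) (g 1)) :=
    ⟨_, fun _ => Iff.rfl⟩
  have hcE : #{g : Fin 2 → ι | E g} = #{p : ι × ι | p.1 ≠ p.2 ∧ B p.1 p.2} := by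
    refine Finset.card_bij (fun g _ => (g 0, g 1)) ?_ ?_ ?_
    · intro g hg
      simpa [hE] using hg
    · intro g _ g' _ h
      simp only [Prod.mk.injEq] at h
      funext i
      fin_cases i
      exacts [h.1, h.2]
    · rintro ⟨x, y⟩ h
      refine ⟨![x, y], ?_, by simp⟩
      simpa [hE] using h
  have hp : ∀ p : W × W, (#{σ : Equiv.Perm ι | H.Adj p.1 p.2 ∧ B (σ (a p.1)) (σ (a p.2))} : ℝ) *
      (Fintype.card ι : ℝ) ^ 2 ≤ (if H.Adj p.1 p.2 then 1 else 0) *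
        (2 * #{p : ι × ι | p.1 ≠ p.2 ∧ B p.1 p.2} * nf) := by
    rintro ⟨u, v⟩
    by_cases huv : H.Adj u v
    · have hne : a u ≠ a v := fun h => huv.ne (a.injective h)
      have h1 := perm_count ![a u, a v] (by
        intro i j h
        fin_cases i <;> fin_cases j <;> simp_all [eq_comm]) E (by simpa using h8)
      rw [hcE, ← hn, Fintype.card_fin] at h1
      simp only [huv, true_and, if_true, one_mul]
      refine le_trans ?_ h1
      gcongr
      intro hB
      rw [hE]
      exact ⟨by simpa using hne, by simpa using hB⟩
    · simp [huv]
  obtain ⟨σ, -, hσ⟩ : ∃ σ ∈ (Finset.univ : Finset (Equiv.Perm ι)),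
      (#{p : W × W | H.Adj p.1 p.2 ∧ B (σ (a p.1)) (σ (a p.2))} : ℝ) * (Fintype.card ι : ℝ) ^ 2 ≤
        2 * #{p : W × W | H.Adj p.1 p.2} * #{p : ι × ι | p.1 ≠ p.2 ∧ B p.1 p.2} := by
    apply Finset.exists_le_of_sum_le Finset.univ_nonempty
    rw [← Finset.sum_mul, Finset.sum_const, Finset.card_univ, Fintype.card_perm, nsmul_eq_mul, ← hn]
    have e : ∑ σ : Equiv.Perm ι, (#{p : W × W | H.Adj p.1 p.2 ∧ B (σ (a p.1)) (σ (a p.2))} : ℝ) =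
        ∑ p : W × W, (#{σ : Equiv.Perm ι | H.Adj p.1 p.2 ∧ B (σ (a p.1)) (σ (a p.2))} : ℝ) := by
      norm_cast
      simp only [Finset.card_filter]
      exact Finset.sum_comm
    rw [e, Finset.sum_mul]
    refine (Finset.sum_le_sum fun p _ => hp p).trans (le_of_eq ?_)
    rw [← Finset.sum_mul, Finset.sum_boole]
    ring
  exact ⟨fun w => σ (a w), fun u v h => a.injective (σ.injective h), hσ⟩

/-! ### Repairing missing edges -/

open scoped Classical in
/-- Disjoint connected sets `A w` that realise all but at most `M` arcs of `H` extend to a minor model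
of `H`, provided any two vertices have `M` common neighbours in a set `R` that the `A w` avoid. Each
missing arc `(u, v)` gets its own vertex of `R` joined to both `A u` and `A v`, which is added to the
branch set of `u`. -/
theorem isMinorOf_of_few_missing {W V : Type*} [Fintype W] [Fintype V] (H : SimpleGraph W)
    (G : SimpleGraph V) (A : W → Set V) (hA : ∀ w, (G.induce (A w)).Connected)
    (hdisj : Pairwise fun w₁ w₂ => Disjoint (A w₁) (A w₂)) (R : Finset V)
    (hR : ∀ w, ∀ v ∈ A w, v ∉ R) (M : ℕ)
    (hM : #{p : W × W | H.Adj p.1 p.2 ∧ ∀ u ∈ A p.1, ∀ v ∈ A p.2, ¬ G.Adj u v} ≤ M)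
    (hRc : ∀ u v, M ≤ #{w ∈ R | G.Adj u w ∧ G.Adj v w}) : H.IsMinorOf G := by
  obtain ⟨Q, hQ⟩ : ∃ Q : W × W → Prop, ∀ p, Q p ↔
    (H.Adj p.1 p.2 ∧ ∀ u ∈ A p.1, ∀ v ∈ A p.2, ¬ G.Adj u v) := ⟨_, fun _ => Iff.rfl⟩
  simp_rw [← hQ] at hM
  have ha : ∀ w, ∃ v, v ∈ A w := fun w => by
    obtain ⟨⟨v, hv⟩⟩ := (hA w).nonempty
    exact ⟨v, hv⟩
  choose a ha using ha
  -- Hall's condition holds because each missing arc alone already has at least `M` candidates.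
  obtain ⟨c, hc, hcm⟩ := (Finset.all_card_le_biUnion_card_iff_exists_injective
    (fun p : {p // Q p} => {w ∈ R | G.Adj (a p.1.1) w ∧ G.Adj (a p.1.2) w})).1 (by
      intro s
      rcases s.eq_empty_or_nonempty with rfl | ⟨p, hp⟩
      · simp
      calc #s ≤ Fintype.card {p // Q p} := Finset.card_le_univ s
        _ = #{p : W × W | Q p} := Fintype.card_subtype _
        _ ≤ M := by convert hM
        _ ≤ _ := hRc _ _
        _ ≤ _ := Finset.card_le_card
          (Finset.subset_biUnion_of_mem
            (fun p : {p // Q p} => {w ∈ R | G.Adj (a p.1.1) w ∧ G.Adj (a p.1.2) w}) hp))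
  simp only [mem_filter] at hcm
  refine ⟨fun w => A w ∪ {v | ∃ p : {p // Q p}, p.1.1 = w ∧ c p = v}, ?_, ?_, ?_⟩
  · intro w
    rw [SimpleGraph.connected_iff_exists_forall_reachable]
    refine ⟨⟨a w, Or.inl (ha w)⟩, ?_⟩
    rintro ⟨v, hv | ⟨p, rfl, rfl⟩⟩
    · have h1 := (hA w).preconnected ⟨a w, ha w⟩ ⟨v, hv⟩
      exact h1.map (SimpleGraph.induceHomOfLE G (Set.subset_union_left)).toHom
    · have : (G.induce (A p.1.1 ∪ {v | ∃ p' : {p // Q p}, p'.1.1 = p.1.1 ∧ c p' = v})).Adj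
        ⟨a p.1.1, Or.inl (ha _)⟩ ⟨c p, Or.inr ⟨p, rfl, rfl⟩⟩ := (hcm p).2.1
      exact this.reachable
  · intro w₁ w₂ hw
    rw [Set.disjoint_left]
    rintro v (h1 | ⟨p, rfl, rfl⟩) (h2 | ⟨p', rfl, h2⟩)
    · exact Set.disjoint_left.1 (hdisj hw) h1 h2
    · subst h2
      exact hR _ _ h1 (hcm p').1
    · exact hR _ _ h2 (hcm p).1
    · exact hw (by rw [hc h2])
  · intro w₁ w₂ hw
    by_cases hq : Q (w₁, w₂)
    · exact ⟨c ⟨_, hq⟩, Or.inr ⟨⟨_, hq⟩, rfl, rfl⟩, a w₂, Or.inl (ha _), (hcm ⟨_, hq⟩).2.2.symm⟩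
    · rw [hQ] at hq
      push Not at hq
      obtain ⟨u, hu, v, hv, h⟩ := hq hw
      exact ⟨u, Or.inl hu, v, Or.inl hv, h⟩

/-! ### The reservoir -/

open scoped Classical in
/-- The exponential moment `E[2 ^ (-X)]`, where `X` is the number of vertices of `N` that receive the
colour `i` in a uniformly random colouring with `k` colours, multiplied by the number of colourings. -/
theorem sum_half_pow {V : Type*} [Fintype V] (k : ℕ) (hk : 0 < k) (N : Finset V) (i : Fin k) :
    ∑ c : V → Fin k, (1 / 2 : ℝ) ^ #{w ∈ N | c w = i} =
      (k : ℝ) ^ Fintype.card V * (1 - 1 / (2 * k)) ^ #N := by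
  have hk0 : (0:ℝ) < k := by exact_mod_cast hk
  have h1 : ∀ c : V → Fin k, (1 / 2 : ℝ) ^ #{w ∈ N | c w = i} =
      ∏ w, if w ∈ N ∧ c w = i then (1 / 2 : ℝ) else 1 := by
    intro c
    rw [Finset.prod_ite, Finset.prod_const_one, mul_one, Finset.prod_const]
    congr 2
    ext; simp
  simp_rw [h1]
  have h2 := Finset.prod_univ_sum (fun _ : V => (Finset.univ : Finset (Fin k)))
    (fun w j => if w ∈ N ∧ j = i then (1 / 2 : ℝ) else 1)
  rw [Fintype.piFinset_univ] at h2
  rw [← h2]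
  have h3 : ∀ w : V, (∑ j : Fin k, if w ∈ N ∧ j = i then (1 / 2 : ℝ) else 1) =
      k * (if w ∈ N then (1 - 1 / (2 * k) : ℝ) else 1) := by
    intro w
    by_cases hw : w ∈ N
    · have : ∀ j : Fin k, (if j = i then (1 / 2 : ℝ) else 1) = 1 - if j = i then 1 / 2 else 0 := by
        intro j; split_ifs <;> norm_num
      simp only [hw, true_and, if_true, this, Finset.sum_sub_distrib, Finset.sum_ite_eq',
        Finset.mem_univ]
      simp
      field_simp
    · simp [hw]
  simp_rw [h3]
  rw [Finset.prod_mul_distrib, Finset.prod_const, Finset.prod_ite, Finset.prod_const_one, mul_one,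
    Finset.prod_const, Finset.card_univ]
  congr 3
  ext; simp

open scoped Classical in
/-- If the minimum degree is a proportion of more than one half, then any two vertices have linearly many
common neighbours, and a random colouring with `k` colours leaves linearly many of them in each colour
class. The smallest colour class then serves as `R`. -/
theorem exists_reservoir (lam : ℝ) (hlam : 1 / 2 < lam) (k : ℕ) (hk : 0 < k) :
    ∃ η : ℝ, 0 < η ∧ ∃ n₀ : ℕ, ∀ (V : Type) [Fintype V] (G : SimpleGraph V),
      n₀ ≤ Fintype.card V →
      (∀ v, lam * Fintype.card V ≤ #{u | G.Adj v u}) →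
      ∃ R : Finset V, #R * k ≤ Fintype.card V ∧
        ∀ u v, η * Fintype.card V ≤ #{w ∈ R | G.Adj u w ∧ G.Adj v w} := by
  have hk0 : (0:ℝ) < k := by exact_mod_cast hk
  have hk1 : (1:ℝ) ≤ k := by exact_mod_cast hk
  set x : ℝ := 1 - 1 / (2 * k) with hx
  have hx0 : 0 < x := by
    have : 1 / (2 * (k:ℝ)) ≤ 1 / 2 := by
      apply one_div_le_one_div_of_le <;> linarith
    linarith
  have hx1 : x < 1 := by
    have : 0 < 1 / (2 * (k:ℝ)) := by positivity
    linarith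
  have hlog : Real.log x < 0 := Real.log_neg hx0 hx1
  have hlog2 : 0 < Real.log 2 := Real.log_pos (by norm_num)
  set α := 2 * lam - 1 with hα
  have hα0 : 0 < α := by linarith
  -- `η` is chosen so that `2 ^ η = x ^ (-α / 2)`: the loss of `2 ^ (η * n)` in Markov's inequality then
  -- eats up only half of the exponent in the moment bound `x ^ (α * n)`.
  set η := -(α / 2) * Real.log x / Real.log 2 with hη
  have hη0 : 0 < η := by
    apply div_pos _ hlog2
    nlinarith
  set ρ := Real.exp (α / 2 * Real.log x) with hρ
  have hρ1 : ρ < 1 := by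
    rw [hρ, Real.exp_lt_one_iff]; nlinarith
  have hρ0 : 0 < ρ := Real.exp_pos _
  -- The union bound runs over `n ^ 2 * k` triples (two vertices and a colour).
  have hlim := (tendsto_pow_const_mul_const_pow_of_abs_lt_one 2
    (by rw [abs_of_pos hρ0]; exact hρ1)).mul_const (k : ℝ)
  rw [zero_mul] at hlim
  obtain ⟨n₀, hn₀⟩ := Filter.eventually_atTop.1 (hlim.eventually_lt_const one_pos)
  refine ⟨η, hη0, n₀, fun V _ G hn hdeg => ?_⟩
  set n := Fintype.card V with hnV
  obtain ⟨C, hC⟩ : ∃ C : V → V → Finset V, ∀ u v, C u v = ({w | G.Adj u w ∧ G.Adj v w} : Finset V) :=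
    ⟨_, fun _ _ => rfl⟩
  have hCc : ∀ u v, α * n ≤ #(C u v) := by
    intro u v
    have h1 := Finset.card_union_add_card_inter ({w | G.Adj u w} : Finset V) {w | G.Adj v w}
    have h2 := Finset.card_le_univ (({w | G.Adj u w} : Finset V) ∪ ({w | G.Adj v w} : Finset V))
    have h3 : ({w | G.Adj u w} : Finset V) ∩ ({w | G.Adj v w} : Finset V) = C u v := by
      rw [hC]; ext; simp
    rw [h3] at h1
    have h4 : (#({w | G.Adj u w} : Finset V) : ℝ) + #({w | G.Adj v w} : Finset V) ≤ n + #(C u v) := by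
      exact_mod_cast (by omega : #({w | G.Adj u w} : Finset V) + #({w | G.Adj v w} : Finset V)
        ≤ n + #(C u v))
    have := hdeg u
    have := hdeg v
    rw [hα]; linarith
  have hcount : ∀ u v i, (#{c : V → Fin k | (#{w ∈ C u v | c w = i} : ℝ) < η * n} : ℝ) ≤
      k ^ n * ρ ^ n := by
    intro u v i
    have h1 := sum_half_pow k hk (C u v) i
    have h2 : (#{c : V → Fin k | (#{w ∈ C u v | c w = i} : ℝ) < η * n} : ℝ) *
        (1 / 2 : ℝ) ^ (η * n) ≤ ∑ c : V → Fin k, (1 / 2 : ℝ) ^ #{w ∈ C u v | c w = i} := by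
      rw [← nsmul_eq_mul]
      refine (Finset.card_nsmul_le_sum _ _ _ fun c hc => ?_).trans
        (Finset.sum_le_sum_of_subset_of_nonneg (Finset.filter_subset _ _)
          fun _ _ _ => by positivity)
      rw [← Real.rpow_natCast]
      exact Real.rpow_le_rpow_of_exponent_ge (by norm_num) (by norm_num)
        (Finset.mem_filter.1 hc).2.le
    rw [h1, ← hx, ← hnV] at h2
    have h3 : x ^ #(C u v) ≤ x ^ (α * n) := by
      rw [← Real.rpow_natCast]
      exact Real.rpow_le_rpow_of_exponent_ge hx0 hx1.le (hCc u v)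
    have h4 : x ^ (α * n) = ρ ^ n * (1 / 2 : ℝ) ^ (η * n) := by
      rw [Real.rpow_def_of_pos hx0, Real.rpow_def_of_pos (by norm_num), hρ, ← Real.exp_nat_mul,
        ← Real.exp_add, hη]
      congr 1
      rw [one_div, Real.log_inv]
      field_simp
      ring
    have h5 : (0:ℝ) < (1 / 2 : ℝ) ^ (η * n) := by positivity
    refine le_of_mul_le_mul_right (h2.trans ?_) h5
    rw [mul_assoc, ← h4]
    gcongr
  have hex : ∃ c : V → Fin k, ∀ u v i, η * n ≤ #{w ∈ C u v | c w = i} := by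
    by_contra hcon
    push Not at hcon
    have h1 : (Finset.univ : Finset (V → Fin k)) ⊆
        (Finset.univ : Finset (V × V × Fin k)).biUnion fun t =>
          {c : V → Fin k | (#{w ∈ C t.1 t.2.1 | c w = t.2.2} : ℝ) < η * n} := by
      intro c _
      obtain ⟨u, v, i, h⟩ := hcon c
      simp only [mem_biUnion, mem_univ, true_and, mem_filter]
      exact ⟨(u, v, i), h⟩
    have h2 : ((k : ℝ)) ^ n ≤ ∑ t : V × V × Fin k,
        (#{c : V → Fin k | (#{w ∈ C t.1 t.2.1 | c w = t.2.2} : ℝ) < η * n} : ℝ) := by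
      have := (Finset.card_le_card h1).trans Finset.card_biUnion_le
      rw [Finset.card_univ, Fintype.card_fun, Fintype.card_fin, ← hnV] at this
      exact_mod_cast this
    have h3 := h2.trans (Finset.sum_le_sum fun t _ => hcount t.1 t.2.1 t.2.2)
    rw [Finset.sum_const, Finset.card_univ, Fintype.card_prod, Fintype.card_prod, Fintype.card_fin,
      ← hnV, nsmul_eq_mul] at h3
    push_cast at h3
    have h4 := hn₀ n hn
    have h5 : (0:ℝ) < (k:ℝ) ^ n := by positivity
    have h6 := mul_lt_mul_of_pos_left h4 h5
    linarith
  obtain ⟨c, hc⟩ := hex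
  -- Some colour class has at most the average size `n / k`.
  obtain ⟨i, -, hi⟩ : ∃ i ∈ (Finset.univ : Finset (Fin k)), #{w : V | c w = i} * k ≤ n := by
    apply Finset.exists_le_of_sum_le ⟨⟨0, hk⟩, Finset.mem_univ _⟩
    rw [← Finset.sum_mul, ← Finset.card_eq_sum_card_fiberwise
      (fun _ _ => Finset.mem_coe.2 (Finset.mem_univ _))]
    simp [hnV, mul_comm]
  refine ⟨({w : V | c w = i} : Finset V), hi, fun u v => (hc u v i).trans ?_⟩
  rw [hC, Finset.filter_filter, Finset.filter_filter]
  simp only [and_comm]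
  exact le_rfl

/-! ### Parameters -/

open scoped Classical in
/-- The number of ordered adjacent pairs is `d * t`, each edge being counted twice. -/
theorem card_arcs {W : Type*} [Fintype W] [Nonempty W] (H : SimpleGraph W) :
    (#{p : W × W | H.Adj p.1 p.2} : ℝ) = H.averageDegree * Fintype.card W := by
  have h1 : #{p : W × W | H.Adj p.1 p.2} = Fintype.card H.Dart := by
    rw [← Finset.card_univ]
    symm
    refine Finset.card_bij (fun d _ => d.toProd) ?_ ?_ ?_
    · intro d _; simp
    · intro d _ d' _ h; exact SimpleGraph.Dart.ext _ _ h
    · intro p hp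
      exact ⟨⟨p, (Finset.mem_filter.1 hp).2⟩, Finset.mem_univ _, rfl⟩
  have h2 : H.edgeSet.ncard = #H.edgeFinset := by
    rw [Set.ncard_eq_toFinset_card', SimpleGraph.edgeFinset]
  have hW : (Fintype.card W : ℝ) ≠ 0 := by exact_mod_cast Fintype.card_ne_zero
  rw [h1, H.dart_card_eq_twice_card_edges, SimpleGraph.averageDegree, h2, Nat.card_eq_fintype_card]
  push_cast
  field_simp

/-- For large `d`, with `l = ⌈√(log_b d)⌉` and `b = β⁻¹`, the failure probabilities of a random
`l`-tuple and the density of missing arcs are as small as required, and `b ^ (l ^ 2) ≥ d`. -/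
theorem eventually_params (β q r γ η D : ℝ) (hβ0 : 0 < β) (hβ1 : β < 1) (hq : 0 < q) (hq2 : q < 1 / 2)
    (hqr : q < r) (hrβ : r < β) (hγ : 0 < γ) (hη : 0 < η) :
    ∃ d₀ : ℝ, ∀ d : ℝ, d₀ ≤ d → ∀ l : ℕ, l = ⌈Real.sqrt (Real.logb β⁻¹ d)⌉₊ →
      D ≤ d ∧ 1 ≤ l ∧ (16 * l : ℝ) ≤ d ∧ (q / r) ^ l + l * (2 * q) ^ (l - 2) ≤ γ / 4 ∧
      32 * (r / β) ^ l ≤ η ∧ d * β ^ l ^ 2 ≤ 1 := by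
  have hr : 0 < r := hq.trans hqr
  have hb1 : 1 < β⁻¹ := (one_lt_inv₀ hβ0).2 hβ1
  have hlb : 0 < Real.log β⁻¹ := Real.log_pos hb1
  have hl : Filter.Tendsto (fun d : ℝ => ⌈Real.sqrt (Real.logb β⁻¹ d)⌉₊) Filter.atTop Filter.atTop :=
    tendsto_nat_ceil_atTop.comp (Real.tendsto_sqrt_atTop.comp (Real.tendsto_logb_atTop hb1))
  have e1 : ∀ᶠ l : ℕ in Filter.atTop, (q / r) ^ l + l * (2 * q) ^ (l - 2) < γ / 4 := by
    have t1 : Filter.Tendsto (fun l : ℕ => (q / r) ^ l) Filter.atTop (nhds 0) :=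
      tendsto_pow_atTop_nhds_zero_of_lt_one (by positivity) ((div_lt_one hr).2 hqr)
    have t2 : Filter.Tendsto (fun l : ℕ => (l : ℝ) * (2 * q) ^ (l - 2)) Filter.atTop (nhds 0) := by
      rw [← Filter.tendsto_add_atTop_iff_nat 2]
      have a1 := tendsto_self_mul_const_pow_of_lt_one (r := 2 * q) (by positivity) (by linarith)
      have a2 := (tendsto_pow_atTop_nhds_zero_of_lt_one (r := 2 * q) (by positivity)
        (by linarith)).const_mul 2
      have := a1.add a2
      simp only [mul_zero, add_zero] at this
      refine this.congr fun l => ?_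
      simp; ring
    have := t1.add t2
    rw [add_zero] at this
    exact this.eventually_lt_const (by positivity)
  have e2 : ∀ᶠ l : ℕ in Filter.atTop, 32 * (r / β) ^ l < η := by
    have t1 := (tendsto_pow_atTop_nhds_zero_of_lt_one (r := r / β) (by positivity)
      ((div_lt_one hβ0).2 hrβ)).const_mul 32
    rw [mul_zero] at t1
    exact t1.eventually_lt_const hη
  have e3 : ∀ᶠ d : ℝ in Filter.atTop, Real.log d ≤ Real.log β⁻¹ / 32 * d := by
    have := Real.isLittleO_log_id_atTop.def (c := Real.log β⁻¹ / 32) (by positivity)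
    filter_upwards [this, Filter.eventually_ge_atTop 1] with d hd hd1
    simp only [id, Real.norm_eq_abs] at hd
    rw [abs_of_nonneg (by linarith : (0:ℝ) ≤ d)] at hd
    exact (le_abs_self _).trans hd
  obtain ⟨d₀, hd₀⟩ := Filter.eventually_atTop.1 ((hl.eventually e1).and <| (hl.eventually e2).and <|
    e3.and <| (hl.eventually (Filter.eventually_ge_atTop 1)).and
      (Filter.eventually_ge_atTop (max D 64)))
  refine ⟨d₀, fun d hd l hldef => ?_⟩
  obtain ⟨h1, h2, h3, h4, h5⟩ := hd₀ d hd
  rw [← hldef] at h1 h2 h4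
  have hd64 : 64 ≤ d := (le_max_right _ _).trans h5
  have hlog0 : 0 ≤ Real.logb β⁻¹ d := Real.logb_nonneg hb1 (by linarith)
  refine ⟨(le_max_left _ _).trans h5, h4, ?_, h1.le, h2.le, ?_⟩
  · have a1 : (l : ℝ) < Real.sqrt (Real.logb β⁻¹ d) + 1 := by
      rw [hldef]; exact Nat.ceil_lt_add_one (Real.sqrt_nonneg _)
    have a2 := Real.sq_sqrt hlog0
    have a3 : Real.sqrt (Real.logb β⁻¹ d) ≤ Real.logb β⁻¹ d + 1 := by
      nlinarith [sq_nonneg (Real.sqrt (Real.logb β⁻¹ d) - 1)]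
    have a4 : Real.logb β⁻¹ d ≤ d / 32 := by
      rw [Real.logb, div_le_iff₀ hlb]; linarith
    linarith
  · have a1 : Real.sqrt (Real.logb β⁻¹ d) ≤ l := by rw [hldef]; exact Nat.le_ceil _
    have a2 : Real.logb β⁻¹ d ≤ (l : ℝ) ^ 2 := (Real.sqrt_le_left (by positivity)).1 a1
    rw [Real.logb_le_iff_le_rpow hb1 (by linarith)] at a2
    have a3 : d ≤ (β⁻¹) ^ l ^ 2 := by
      rw [← Real.rpow_natCast]; exact_mod_cast a2
    rw [inv_pow] at a3
    have a4 : 0 < β ^ l ^ 2 := by positivity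
    calc d * β ^ l ^ 2 ≤ (β ^ l ^ 2)⁻¹ * β ^ l ^ 2 := by gcongr
      _ = 1 := inv_mul_cancel₀ a4.ne'

/-- Cutting `N` vertices into blocks of size `l` gives `T` blocks, more than `t` by a constant factor:
the reservoir costs only a factor `1 - δ / 2`, and `4 / eps ≤ t` absorbs the rounding. -/
theorem tuple_count_lower {eps δ t n N l T : ℝ} (heps : 0 < eps) (heps1 : eps < 1) (hδ0 : 0 < δ)
    (hδ : δ ≤ eps / 2) (ht : 0 < t) (hl : 0 < l) (hte : 4 / eps ≤ t)
    (hn : (1 + eps) * l * t ≤ n) (hN : (1 - δ / 2) * n ≤ N) (hT : N < l * (T + 1)) :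
    (1 + eps / 4) * t ≤ T := by
  have h3 : (1 - δ / 2) * ((1 + eps) * l * t) < l * (T + 1) := by
    refine lt_of_le_of_lt ?_ (hN.trans_lt hT)
    apply mul_le_mul_of_nonneg_left hn; linarith
  have h4 : l * ((1 - δ / 2) * (1 + eps) * t) < l * (T + 1) := by linarith
  have h5 := lt_of_mul_lt_mul_left h4 hl.le
  have h6 : (1 + eps / 2) * t ≤ (1 - δ / 2) * (1 + eps) * t := by
    gcongr
    nlinarith
  have h7 : 4 ≤ t * eps := by rwa [div_le_iff₀ heps] at hte
  linarith

/-- At least `t` blocks are left after the bad ones have been discarded. -/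
theorem card_good_lower {eps t T I : ℝ} (heps : 0 < eps) (heps1 : eps < 1) (ht : 0 < t)
    (hT : (1 + eps / 4) * t ≤ T) (hI : (1 - eps / 8) * T ≤ I) : t ≤ I := by
  have h1 : (1 - eps / 8) * ((1 + eps / 4) * t) ≤ (1 - eps / 8) * T := by
    apply mul_le_mul_of_nonneg_left hT; linarith
  have h2 : 0 ≤ (eps / 8 - eps ^ 2 / 32) * t := by
    apply mul_nonneg _ ht.le
    nlinarith
  nlinarith

/-- The number `m` of missing arcs is at most `η * t`: their expected number is of order
`d * t * r ^ (l ^ 2)`, while `d ≤ β ^ (-l ^ 2)` with `r < β`. -/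
theorem missing_le {m T I d t r β η : ℝ} {l : ℕ} (hm : 0 ≤ m) (hT : 0 < T) (hIT : T / 2 ≤ I)
    (ht : 0 < t) (hr : 0 < r) (hrβ : r < β)
    (h : m * I ^ 2 ≤ 2 * (d * t) * (4 * r ^ l ^ 2 * T ^ 2))
    (hdβ : d * β ^ l ^ 2 ≤ 1) (hη : 32 * (r / β) ^ l ≤ η) : m ≤ η * t := by
  have hβ : 0 < β := hr.trans hrβ
  have h1 : m * (T / 2) ^ 2 ≤ 2 * (d * t) * (4 * r ^ l ^ 2 * T ^ 2) := by
    refine le_trans ?_ h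
    gcongr
  have h2 : m ≤ 32 * (d * r ^ l ^ 2) * t := by
    have : m * T ^ 2 ≤ 32 * (d * r ^ l ^ 2) * t * T ^ 2 := by linarith
    exact le_of_mul_le_mul_right this (by positivity)
  have h3 : d * r ^ l ^ 2 ≤ (r / β) ^ l := by
    have e : r ^ l ^ 2 = β ^ l ^ 2 * (r / β) ^ l ^ 2 := by
      rw [← mul_pow]; congr 1; field_simp
    have h4 : (r / β) ^ l ^ 2 ≤ (r / β) ^ l := by
      apply pow_le_pow_of_le_one (by positivity)
      · rw [div_le_one hβ]; linarith
      · exact Nat.le_self_pow (by norm_num) l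
    rw [e, ← mul_assoc]
    calc d * β ^ l ^ 2 * (r / β) ^ l ^ 2 ≤ 1 * (r / β) ^ l := by gcongr
      _ = _ := one_mul _
  calc m ≤ 32 * (r / β) ^ l * t := h2.trans (by gcongr)
    _ ≤ η * t := by gcongr

end HeartLemma

/-! ### The embedding -/

open Finset HeartLemma

/-- For all `λ ∈ (1/2, 1)` and `ε ∈ (0, λ)` there exists `d₀` such that, with
`b = (1 − λ + ε)⁻¹`, for every graph `H` with `t` vertices and average degree `d ≥ d₀`,
every graph `G` with `n ≥ (1+ε)·⌈√(log_b d)⌉·t` vertices and minimum degree at least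
`λn` contains `H` as a minor. -/
theorem heart_lemma (lam eps : ℝ) (hlam₁ : 1 / 2 < lam) (hlam₂ : lam < 1)
    (heps₁ : 0 < eps) (heps₂ : eps < lam) :
    ∃ d₀ : ℝ, ∀ (W : Type) [Fintype W] [Nonempty W] (H : SimpleGraph W)
      (V : Type) [Fintype V] (G : SimpleGraph V),
      d₀ ≤ H.averageDegree →
      (1 + eps) * (⌈Real.sqrt (Real.logb (1 - lam + eps)⁻¹ H.averageDegree)⌉₊ : ℝ) *
          (Nat.card W : ℝ) ≤ (Nat.card V : ℝ) →
      (∀ v : V, lam * (Nat.card V : ℝ) ≤ ((G.neighborSet v).ncard : ℝ)) →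
      H.IsMinorOf G := by
  classical
  obtain ⟨β, hβ⟩ : ∃ β, β = 1 - lam + eps := ⟨_, rfl⟩
  rw [← hβ]
  -- `δ` is the room for the reservoir. It keeps the proportion `q` of non-neighbours outside the
  -- reservoir below both `β` and `1 / 2`; `r` lies strictly between `q` and `β`.
  obtain ⟨δ, hδ0, hδ1, hδ2⟩ : ∃ δ : ℝ, 0 < δ ∧ δ ≤ eps / 2 ∧ δ ≤ (lam - 1 / 2) / 2 :=
    ⟨min (eps / 2) ((lam - 1 / 2) / 2), lt_min (by linarith) (by linarith), min_le_left _ _,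
      min_le_right _ _⟩
  obtain ⟨q, hq⟩ : ∃ q, q = 1 - lam + δ := ⟨_, rfl⟩
  obtain ⟨r, hr⟩ : ∃ r, r = (q + β) / 2 := ⟨_, rfl⟩
  obtain ⟨k, hk0, hk1⟩ : ∃ k : ℕ, 0 < k ∧ 1 / (k : ℝ) ≤ δ / 2 := by
    obtain ⟨m, hm⟩ := exists_nat_one_div_lt (half_pos hδ0)
    exact ⟨m + 1, m.succ_pos, by push_cast; exact hm.le⟩
  obtain ⟨η, hη, n₀, hres⟩ := exists_reservoir lam hlam₁ k hk0
  obtain ⟨d₀, hd₀⟩ := eventually_params β q r (eps / 8) η (max n₀ (max 8 (4 / eps)))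
    (by linarith) (by linarith) (by linarith) (by linarith) (by linarith) (by linarith)
    (by linarith) hη
  refine ⟨d₀, fun W _ _ H V _ G hd hn hdeg => ?_⟩
  obtain ⟨l, hl⟩ : ∃ l, l = ⌈Real.sqrt (Real.logb β⁻¹ H.averageDegree)⌉₊ := ⟨_, rfl⟩
  obtain ⟨hD, hl1, hl16, hp, hη', hdβ⟩ := hd₀ _ hd l hl
  rw [← hl, Nat.card_eq_fintype_card, Nat.card_eq_fintype_card] at hn
  have harcs := card_arcs H
  set d := H.averageDegree
  obtain ⟨t, ht⟩ : ∃ t, t = Fintype.card W := ⟨_, rfl⟩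
  obtain ⟨n, hnn⟩ : ∃ n, n = Fintype.card V := ⟨_, rfl⟩
  rw [← ht, ← hnn] at hn
  rw [← ht] at harcs
  have hdn : (n₀ : ℝ) ≤ d := (le_max_left _ _).trans hD
  have hd8 : 8 ≤ d := (le_max_left _ _).trans ((le_max_right _ _).trans hD)
  have hde : 4 / eps ≤ d := (le_max_right _ _).trans ((le_max_right _ _).trans hD)
  have ht0 : (0:ℝ) < t := by rw [ht]; exact_mod_cast Fintype.card_pos
  have hdt : d ≤ t := by
    have h1 : (#{p : W × W | H.Adj p.1 p.2} : ℝ) ≤ t * t := by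
      have := Finset.card_le_univ ({p : W × W | H.Adj p.1 p.2} : Finset (W × W))
      rw [Fintype.card_prod, ← ht] at this
      exact_mod_cast this
    rw [harcs] at h1
    exact le_of_mul_le_mul_right h1 ht0
  have hl1' : (1:ℝ) ≤ l := by exact_mod_cast hl1
  have hlt : (l : ℝ) * t ≤ n := by
    have : 0 ≤ eps * (l * t) := by positivity
    linarith
  have htn : (t : ℝ) ≤ n := by nlinarith
  have hdeg' : ∀ v, lam * n ≤ #({u | G.Adj v u} : Finset V) := by
    intro v
    have h1 := hdeg v
    rw [Nat.card_eq_fintype_card, ← hnn, Set.ncard_eq_toFinset_card'] at h1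
    convert h1 using 3
    ext; simp
  -- The reservoir `R` is set aside; the branch sets are first built in the remainder `U`.
  obtain ⟨R, hRk, hRc⟩ := hres V G (by
    rw [← hnn]; exact_mod_cast hdn.trans (hdt.trans htn)) (by rw [← hnn]; convert hdeg')
  rw [← hnn] at hRk
  have hRn : (#R : ℝ) ≤ δ / 2 * n := by
    have hk0' : (0:ℝ) < k := by exact_mod_cast hk0
    have h1 : (#R : ℝ) * k ≤ n := by exact_mod_cast hRk
    have h2 : (#R : ℝ) ≤ 1 / k * n := by
      rw [div_mul_eq_mul_div, le_div_iff₀ hk0']; linarith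
    refine h2.trans ?_
    gcongr
  have hn0 : (0:ℝ) < n := by linarith
  let U := {v : V // v ∉ R}
  have hUc : (Fintype.card U : ℝ) = n - #R := by
    have h1 : Fintype.card U = #Rᶜ := by
      rw [Fintype.card_subtype]
      congr 1; ext; simp
    have h2 := Finset.card_add_card_compl R
    rw [← hnn] at h2
    rw [h1, ← h2]; push_cast; ring
  have hUn : (1 - δ / 2) * n ≤ Fintype.card U := by rw [hUc]; linarith
  have hU2 : (n : ℝ) / 2 ≤ Fintype.card U := by
    have : (1 / 2 : ℝ) * n ≤ (1 - δ / 2) * n := by gcongr; linarith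
    linarith
  have hUpos : 0 < Fintype.card U := by
    have : (0:ℝ) < Fintype.card U := by linarith
    exact_mod_cast this
  have : Nonempty U := Fintype.card_pos_iff.1 hUpos
  let G' : SimpleGraph U := G.comap Subtype.val
  have hM : ∀ v : U, (#{u : U | ¬ G'.Adj v u} : ℝ) ≤ q * Fintype.card U := by
    intro v
    have h1 : #{u : U | ¬ G'.Adj v u} ≤ #({u | ¬ G.Adj v u} : Finset V) := by
      refine Finset.card_le_card_of_injOn Subtype.val ?_ Subtype.val_injective.injOn
      intro u hu
      simpa [G'] using hu
    have h2 := Finset.card_filter_add_card_filter_not (s := (Finset.univ : Finset V))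
      (fun u => G.Adj v u)
    rw [Finset.card_univ, ← hnn] at h2
    have h3 : (#({u | G.Adj v u} : Finset V) : ℝ) + #({u | ¬ G.Adj v u} : Finset V) = n := by
      exact_mod_cast h2
    have h4 : (#{u : U | ¬ G'.Adj v u} : ℝ) ≤ #({u | ¬ G.Adj v u} : Finset V) := by
      exact_mod_cast h1
    have h5 := hdeg' v
    have h6 : (1 - lam) * n ≤ q * ((1 - δ / 2) * n) := by
      rw [← mul_assoc]
      gcongr
      have : q * δ ≤ 1 * δ := by
        apply mul_le_mul_of_nonneg_right _ hδ0.le; linarith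
      linarith
    have h7 : q * ((1 - δ / 2) * n) ≤ q * Fintype.card U := by
      apply mul_le_mul_of_nonneg_left hUn; linarith
    linarith
  have hN8 : 8 * l ^ 2 ≤ Fintype.card U := by
    have : (8 * l ^ 2 : ℝ) ≤ Fintype.card U := by
      have h1 : (l : ℝ) * (16 * l) ≤ l * t := by
        gcongr; linarith
      nlinarith
    exact_mod_cast this
  obtain ⟨T, hTdef⟩ : ∃ T, T = Fintype.card U / l := ⟨_, rfl⟩
  have hTl : T * l ≤ Fintype.card U := by rw [hTdef]; exact Nat.div_mul_le_self _ _
  have hTlow : (1 + eps / 4) * t ≤ T := by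
    have h1 : Fintype.card U < l * (T + 1) := by
      rw [hTdef]; exact Nat.lt_mul_div_succ _ hl1
    have h2 : (Fintype.card U : ℝ) < l * (T + 1) := by exact_mod_cast h1
    exact tuple_count_lower heps₁ (heps₂.trans hlam₂) hδ0 hδ1 ht0 (by linarith) (hde.trans hdt)
      hn hUn h2
  have hT0' : (0:ℝ) < T := lt_of_lt_of_le (by positivity) hTlow
  have hT0 : 0 < T := by exact_mod_cast hT0'
  obtain ⟨x, I, hxd, hI, hxc, hxp⟩ := random_sets G' q r (eps / 8) (by linarith) (by convert hM) l hl1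
    hN8 (by linarith) hp T hT0 hTl
  have hIt : (t:ℝ) ≤ #I :=
    card_good_lower heps₁ (heps₂.trans hlam₂) ht0 hTlow hI
  have hIT : (T:ℝ) / 2 ≤ #I := by
    have : (1 / 2 : ℝ) * T ≤ (1 - eps / 8) * T := by gcongr; linarith
    linarith
  -- `B i j` says that no edge runs between the blocks `i` and `j`. It is kept abstract so that its
  -- decidability instance is the same everywhere below.
  obtain ⟨B, hB⟩ : ∃ B : I → I → Prop, ∀ i j, B i j ↔ ∀ k m, ¬ G'.Adj (x i k) (x j m) :=
    ⟨_, fun _ _ => Iff.rfl⟩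
  obtain ⟨f, hf, hfc⟩ := exists_placement H B
    (by rw [Fintype.card_coe, ← ht]; exact_mod_cast hIt)
    (by
      rw [Fintype.card_coe]
      have : (8:ℝ) ≤ #I := by linarith
      exact_mod_cast this)
  rw [Fintype.card_coe, harcs] at hfc
  have hBc : (#{p : I × I | p.1 ≠ p.2 ∧ B p.1 p.2} : ℝ) ≤ 4 * r ^ l ^ 2 * T ^ 2 := by
    refine le_trans ?_ hxp
    norm_cast
    refine Finset.card_le_card_of_injOn (fun p => (p.1.1, p.2.1)) ?_ ?_
    · rintro ⟨i, j⟩ hp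
      simp only [coe_filter, mem_univ, true_and, Set.mem_ofPred_eq] at hp ⊢
      exact ⟨i.2, fun h => hp.1 (Subtype.ext h), (hB _ _).1 hp.2⟩
    · rintro ⟨i, j⟩ _ ⟨i', j'⟩ _ h
      simp only [Prod.mk.injEq] at h
      exact Prod.ext (Subtype.ext h.1) (Subtype.ext h.2)
  have hfin : (#{p : W × W | H.Adj p.1 p.2 ∧ B (f p.1) (f p.2)} : ℝ) ≤ η * n := by
    have h1 := missing_le (by positivity) hT0' hIT ht0 (by linarith) (by linarith)
      (hfc.trans (mul_le_mul_of_nonneg_left (le_trans (le_of_eq (by congr!)) hBc)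
        (mul_nonneg zero_le_two (mul_nonneg (by linarith) ht0.le)))) hdβ hη'
    exact h1.trans (mul_le_mul_of_nonneg_left htn hη.le)
  refine isMinorOf_of_few_missing H G (fun w => Set.range fun k => (x (f w) k).1) ?_ ?_ R ?_
    #{p : W × W | H.Adj p.1 p.2 ∧ B (f p.1) (f p.2)} ?_ ?_
  · intro w
    let φ : G'.induce (Set.range (x (f w))) →g
        G.induce (Set.range fun k => (x (f w) k).1) :=
      { toFun := fun u => ⟨u.1.1, by obtain ⟨_, k, rfl⟩ := u; exact ⟨k, rfl⟩⟩
        map_rel' := fun h => h }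
    refine (hxc _ (f w).2).map φ ?_
    rintro ⟨_, k, rfl⟩
    exact ⟨⟨x (f w) k, k, rfl⟩, rfl⟩
  · intro w₁ w₂ hw
    rw [Set.disjoint_left]
    rintro _ ⟨k, rfl⟩ ⟨m, hm⟩
    exact hw (hf (Subtype.ext (hxd _ m _ k (Subtype.ext hm)).symm))
  · rintro w _ ⟨k, rfl⟩
    exact (x (f w) k).2
  · refine Finset.card_le_card fun p hp => ?_
    simp only [mem_filter, mem_univ, true_and, Set.forall_mem_range] at hp ⊢
    exact ⟨hp.1, (hB _ _).2 fun k m => hp.2 k m⟩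
  · intro u v
    have h1 := hRc u v
    rw [← hnn] at h1
    have h2 := hfin.trans h1
    have h3 : #{p : W × W | H.Adj p.1 p.2 ∧ B (f p.1) (f p.2)} ≤
      #{w ∈ R | G.Adj u w ∧ G.Adj v w} := by
      convert (Nat.cast_le (α := ℝ)).1 h2
    convert h3
end

section
/- For every integer k ≥ 1, every simple graph with average degree at least 4k − 2 contains the disjoint union of k triangles as a minor; moreover, for every real d < 4k − 2 there is a simple graph with average degree at least d that does not contain the disjoint union of k triangles as a minor. Hence f(H) = 4k − 2 where H is the disjoint union of k triangles. -/
/-!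
The upper bound is proved in the equivalent form of vertex-disjoint cycles: a graph with
`n ≥ k` vertices and at least `(2 * k - 1) * n` edges has `k` disjoint triangle models
(`hasTriangles_of_dense`).  The proof is by induction on `k`, and for fixed `k` on the number of
vertices.  For the step from `k` to `k + 1`, let `v` be a vertex of minimum degree.

* If `v` is isolated, delete it.
* If `v` has a neighbour `u` without a common neighbour of `u` and `v`, contract `uv`; this costs
  one vertex and only one edge.
* Otherwise `v` lies in a triangle `v, u, w`.  Deleting it removes at most
  `deg v + 2 * n - 5` edges, and since `v` has minimum degree the remaining graph still has at
  least `(2 * k - 1) * (n - 3)` edges; the triangle itself is the additional cycle.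

To avoid changing the vertex type, everything takes place inside a finite set `S` of vertices of a
fixed type: deletion shrinks `S`, and contraction of `uv` shrinks `S` by `v` and gives `u` the
neighbours of `v`.  Edges are counted twice, as a sum of degrees.

The lower bound comes from complete bipartite graphs `K_{2k-1,N}` with `N` large: of the three
branch sets of a triangle at least two meet the side of size `2 * k - 1`, since that side covers
every edge.  So `k` disjoint triangles would need `2 * k` vertices on that side.
-/

open SimpleGraph

/-- The disjoint union of `k` triangles: `k` pairwise vertex-disjoint 3-cycles. -/
def disjointTriangles (k : ℕ) : SimpleGraph (Fin k × Fin 3) :=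
  SimpleGraph.fromRel fun x y => x.1 = y.1

namespace DisjointTriangles

open Finset

/-! ### Counting edges inside a vertex set -/

section Count

variable {V : Type*}

open Classical in
/-- The number of neighbours of `v` in `S`. -/
noncomputable def degIn (G : SimpleGraph V) (S : Finset V) (v : V) : ℕ :=
  #{y ∈ S | G.Adj v y}

/-- Twice the number of edges of `G` with both ends in `S`. -/
noncomputable def degSum (G : SimpleGraph V) (S : Finset V) : ℕ :=
  ∑ x ∈ S, degIn G S x

lemma degIn_le_card_sub_one (G : SimpleGraph V) {S : Finset V} {v : V} (hv : v ∈ S) :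
    degIn G S v + 1 ≤ #S := by
  classical
  have : #{y ∈ S | G.Adj v y} < #S := by
    apply Finset.card_lt_card
    rw [Finset.ssubset_iff_of_subset (Finset.filter_subset _ _)]
    exact ⟨v, hv, by simp⟩
  unfold degIn
  convert Nat.succ_le_of_lt this

lemma degSum_le (G : SimpleGraph V) (S : Finset V) :
    degSum G S + #S ≤ #S * #S := by
  have : ∑ x ∈ S, (degIn G S x + 1) ≤ ∑ _x ∈ S, #S :=
    Finset.sum_le_sum fun x hx => degIn_le_card_sub_one G hx
  simpa [Finset.sum_add_distrib, degSum] using this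

lemma degSum_mono {G G' : SimpleGraph V} {S : Finset V}
    (h : ∀ x ∈ S, ∀ y ∈ S, G.Adj x y → G'.Adj x y) : degSum G S ≤ degSum G' S := by
  classical
  refine Finset.sum_le_sum fun x hx => Finset.card_le_card fun y hy => ?_
  simp only [Finset.mem_filter] at hy ⊢
  exact ⟨hy.1, h x hx y hy.1 hy.2⟩

lemma degSum_erase [DecidableEq V] (G : SimpleGraph V) {S : Finset V} {v : V} (hv : v ∈ S) :
    degSum G (S.erase v) + 2 * degIn G S v = degSum G S := by
  classical
  have h1 : degSum G S = degIn G S v + ∑ x ∈ S.erase v, degIn G S x :=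
    (Finset.add_sum_erase S _ hv).symm
  have h2 : ∀ x ∈ S.erase v, degIn G S x =
      degIn G (S.erase v) x + if G.Adj v x then 1 else 0 := by
    intro x _
    simp only [degIn, Finset.card_filter]
    rw [← Finset.add_sum_erase S _ hv, add_comm]
    simp [G.adj_comm x v]
  have h3 : ∑ x ∈ S.erase v, (if G.Adj v x then 1 else 0) = degIn G S v := by
    simp only [degIn, Finset.card_filter]
    rw [← Finset.add_sum_erase S _ hv]
    simp
  rw [h1, Finset.sum_congr rfl h2, Finset.sum_add_distrib, h3, degSum]
  ring

lemma degIn_erase_of_adj [DecidableEq V] (G : SimpleGraph V) {S : Finset V} {u v : V}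
    (hv : v ∈ S) (h : G.Adj u v) : degIn G (S.erase v) u + 1 = degIn G S u := by
  classical
  simp only [degIn, Finset.card_filter]
  rw [← Finset.add_sum_erase S _ hv, add_comm]
  simp [h]

end Count

/-! ### Triangle models and contractions -/

section Model

variable {V : Type*}

/-- `G` has a minor model of `k` disjoint triangles all of whose branch sets lie in `S`. -/
def HasTriangles (k : ℕ) (G : SimpleGraph V) (S : Finset V) : Prop :=
  ∃ B : Fin k → Fin 3 → Set V,
    (∀ i j, B i j ⊆ S) ∧
    (∀ i j, (G.induce (B i j)).Connected) ∧
    (∀ i j i' j', (i, j) ≠ (i', j') → Disjoint (B i j) (B i' j')) ∧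
    ∀ i j j', j ≠ j' → ∃ x ∈ B i j, ∃ y ∈ B i j', G.Adj x y

lemma HasTriangles.mono {k : ℕ} {G : SimpleGraph V} {S T : Finset V} (hST : S ⊆ T)
    (h : HasTriangles k G S) : HasTriangles k G T := by
  obtain ⟨B, h1, h2⟩ := h
  exact ⟨B, fun i j => (h1 i j).trans (by exact_mod_cast hST), h2⟩

/-- `G` together with all edges from `u` to the neighbours of `v`.  Restricted to the vertices
other than `v`, this is the graph obtained by contracting the edge `uv` onto `u`. -/
def contract (G : SimpleGraph V) (u v : V) : SimpleGraph V :=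
  G ⊔ SimpleGraph.fromRel fun x y => x = u ∧ G.Adj v y

lemma contract_adj {G : SimpleGraph V} {u v x y : V} :
    (contract G u v).Adj x y ↔
      G.Adj x y ∨ x ≠ y ∧ (x = u ∧ G.Adj v y ∨ y = u ∧ G.Adj v x) := by
  simp [contract, SimpleGraph.sup_adj, SimpleGraph.fromRel_adj]

/-- The branch set of `G` corresponding to a branch set of the contraction of `uv` onto `u`. -/
def lift (u v : V) (T : Set V) : Set V := {x | x ∈ T ∨ u ∈ T ∧ x = v}

lemma subset_lift (u v : V) (T : Set V) : T ⊆ lift u v T := fun _ hx => Or.inl hx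

lemma lift_connected {G : SimpleGraph V} {u v : V} (huv : G.Adj u v) {T : Set V}
    (hT : ((contract G u v).induce T).Connected) : (G.induce (lift u v T)).Connected := by
  have key : ∀ x y : T, ((contract G u v).induce T).Reachable x y →
      (G.induce (lift u v T)).Reachable ⟨x, subset_lift u v T x.2⟩
        ⟨y, subset_lift u v T y.2⟩ := by
    rintro x y ⟨p⟩
    induction p with
    | nil => exact SimpleGraph.Reachable.refl _
    | @cons a b c hab _ ih =>
      refine SimpleGraph.Reachable.trans ?_ ih
      obtain ⟨a, ha⟩ := a
      obtain ⟨b, hb⟩ := b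
      have hab' : (contract G u v).Adj a b := hab
      rw [contract_adj] at hab'
      -- an edge added by the contraction becomes a path of length two through `v`
      rcases hab' with h | ⟨-, ⟨rfl, h⟩ | ⟨rfl, h⟩⟩
      · exact SimpleGraph.Adj.reachable h
      · have hv : v ∈ lift a v T := Or.inr ⟨ha, rfl⟩
        have ha' : a ∈ lift a v T := Or.inl ha
        exact (SimpleGraph.Adj.reachable (G := G.induce _) (u := ⟨a, ha'⟩) (v := ⟨v, hv⟩) huv).trans
          (SimpleGraph.Adj.reachable (G := G.induce _) (u := ⟨v, hv⟩) h)
      · have hv : v ∈ lift b v T := Or.inr ⟨hb, rfl⟩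
        have ha' : a ∈ lift b v T := Or.inl ha
        exact (SimpleGraph.Adj.reachable (G := G.induce _) (u := ⟨a, ha'⟩) (v := ⟨v, hv⟩) h.symm).trans
          (SimpleGraph.Adj.reachable (G := G.induce _) (u := ⟨v, hv⟩) huv.symm)
  have key' : ∀ x : lift u v T, ∃ y : T,
      (G.induce (lift u v T)).Reachable x ⟨y, subset_lift u v T y.2⟩ := by
    rintro ⟨x, hx | ⟨hu, rfl⟩⟩
    · exact ⟨⟨x, hx⟩, SimpleGraph.Reachable.refl _⟩
    · exact ⟨⟨u, hu⟩, SimpleGraph.Adj.reachable huv.symm⟩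
  obtain ⟨t⟩ := hT.nonempty
  have : Nonempty (lift u v T) := ⟨⟨t, subset_lift u v T t.2⟩⟩
  refine SimpleGraph.Connected.mk fun x y => ?_
  obtain ⟨x', hx'⟩ := key' x
  obtain ⟨y', hy'⟩ := key' y
  exact hx'.trans ((key x' y' (hT.preconnected x' y')).trans hy'.symm)

lemma HasTriangles.of_contract [DecidableEq V] {k : ℕ} {G : SimpleGraph V} {S : Finset V} {u v : V}
    (hv : v ∈ S) (huv : G.Adj u v) (h : HasTriangles k (contract G u v) (S.erase v)) :
    HasTriangles k G S := by
  obtain ⟨B, h1, h2, h3, h4⟩ := h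
  have hvB : ∀ i j, v ∉ B i j := fun i j hm => by simpa using h1 i j hm
  have hBS : ∀ i j, ∀ x ∈ B i j, x ∈ S := fun i j x hx => by
    have := h1 i j hx
    simp at this
    exact this.1
  refine ⟨fun i j => lift u v (B i j), ?_, fun i j => lift_connected huv (h2 i j), ?_, ?_⟩
  · rintro i j x (hx | ⟨-, rfl⟩)
    · exact hBS i j x hx
    · exact hv
  · intro i j i' j' hne
    have hd := Set.disjoint_left.1 (h3 i j i' j' hne)
    rw [Set.disjoint_left]
    rintro x (hx | ⟨hu, rfl⟩) (hx' | ⟨hu', h⟩)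
    · exact hd hx hx'
    · exact hvB i j (h ▸ hx)
    · exact hvB i' j' hx'
    · exact hd hu hu'
  · intro i j j' hne
    obtain ⟨x, hx, y, hy, hxy⟩ := h4 i j j' hne
    rw [contract_adj] at hxy
    rcases hxy with h | ⟨-, ⟨rfl, h⟩ | ⟨rfl, h⟩⟩
    · exact ⟨x, subset_lift _ _ _ hx, y, subset_lift _ _ _ hy, h⟩
    · exact ⟨v, Or.inr ⟨hx, rfl⟩, y, subset_lift _ _ _ hy, h⟩
    · exact ⟨x, subset_lift _ _ _ hx, v, Or.inr ⟨hy, rfl⟩, h.symm⟩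

/-- Contracting an edge that lies in no triangle of `S` loses only that edge. -/
lemma degSum_contract [DecidableEq V] {G : SimpleGraph V} {S : Finset V} {u v : V}
    (hu : u ∈ S) (hv : v ∈ S) (huv : G.Adj u v)
    (hno : ∀ w ∈ S, ¬ (G.Adj u w ∧ G.Adj v w)) :
    degSum G S ≤ degSum (contract G u v) (S.erase v) + 2 := by
  classical
  have hu' : u ∈ S.erase v := Finset.mem_erase.2 ⟨huv.ne, hu⟩
  have e1 := degSum_erase G hv
  have e2 := degSum_erase G hu'
  have e3 := degSum_erase (contract G u v) hu'
  have e4 := degIn_erase_of_adj G hu huv.symm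
  have e5 : degSum G ((S.erase v).erase u) ≤ degSum (contract G u v) ((S.erase v).erase u) :=
    degSum_mono fun x _ y _ h => contract_adj.2 (Or.inl h)
  have e6 : degIn G (S.erase v) u + degIn G (S.erase u) v ≤
      degIn (contract G u v) (S.erase v) u := by
    unfold degIn
    rw [← Finset.card_union_of_disjoint]
    · refine Finset.card_le_card fun y hy => ?_
      simp only [Finset.mem_union, Finset.mem_filter, Finset.mem_erase, contract_adj] at hy ⊢
      rcases hy with ⟨h, h'⟩ | ⟨h, h'⟩
      · exact ⟨h, Or.inl h'⟩
      · exact ⟨⟨h'.ne', h.2⟩, Or.inr ⟨h.1.symm, Or.inl ⟨trivial, h'⟩⟩⟩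
    · rw [Finset.disjoint_left]
      intro y hy hy'
      simp only [Finset.mem_filter, Finset.mem_erase] at hy hy'
      exact hno y hy.1.2 ⟨hy.2, hy'.2⟩
  omega

lemma HasTriangles.add_triangle [DecidableEq V] {k : ℕ} {G : SimpleGraph V} {S : Finset V}
    {a b c : V} (ha : a ∈ S) (hb : b ∈ S) (hc : c ∈ S)
    (hab : G.Adj a b) (hac : G.Adj a c) (hbc : G.Adj b c)
    (h : HasTriangles k G (((S.erase a).erase b).erase c)) : HasTriangles (k + 1) G S := by
  obtain ⟨B, h1, h2, h3, h4⟩ := h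
  let t : Fin 3 → V := ![a, b, c]
  have htS : ∀ j, t j ∈ S := by
    intro j; fin_cases j <;> assumption
  have ht : ∀ j j', j ≠ j' → G.Adj (t j) (t j') := by
    intro j j' hne
    fin_cases j <;> fin_cases j' <;>
      simp_all [t, hab.symm, hac.symm, hbc.symm]
  have htB : ∀ i j j', t j' ∉ B i j := by
    intro i j j' hm
    have := h1 i j hm
    simp only [Finset.coe_erase, Set.mem_sdiff, Set.mem_singleton_iff] at this
    fin_cases j' <;> simp [t] at this
  refine ⟨Fin.cons (fun j => {t j}) B, ?_, ?_, ?_, ?_⟩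
  · intro i j
    refine Fin.cases ?_ (fun i => ?_) i
    · simpa using htS j
    · intro x hx
      have := h1 i j hx
      simp at this
      exact this.1.1.1
  · intro i j
    refine Fin.cases ?_ (fun i => ?_) i
    · rw [Fin.cons_zero]
      exact SimpleGraph.Connected.mk (SimpleGraph.Preconnected.of_subsingleton)
    · exact h2 i j
  · intro i j i' j'
    refine Fin.cases ?_ (fun i => ?_) i <;> refine Fin.cases ?_ (fun i' => ?_) i'
    · intro hne
      have : j ≠ j' := by rintro rfl; exact hne rfl
      simpa using (ht j j' this).ne
    · intro _
      simpa using htB i' j' j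
    · intro _
      simpa using htB i j j'
    · intro hne
      exact h3 i j i' j' (by simpa using hne)
  · intro i j j' hne
    refine Fin.cases ?_ (fun i => ?_) i
    · exact ⟨t j, by simp, t j', by simp, ht j j' hne⟩
    · exact h4 i j j' hne

end Model

/-! ### The upper bound -/

/-- If at least `(2 * k - 1) * #S` edges of `G` lie in `S`, then `S` carries `k` disjoint
triangle models.  The edge condition is doubled and stated without subtraction; the condition
`k ≤ #S` only excludes `S = ∅` when `k` is positive. -/
theorem hasTriangles_of_dense {V : Type*} (k : ℕ) :
    ∀ (n : ℕ) (G : SimpleGraph V) (S : Finset V), #S = n → k ≤ #S →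
      4 * k * #S ≤ degSum G S + 2 * #S → HasTriangles k G S := by
  classical
  induction k with
  | zero =>
    intro n G S _ _ _
    exact ⟨fun i => i.elim0, fun i => i.elim0, fun i => i.elim0, fun i => i.elim0,
      fun i => i.elim0⟩
  | succ k ihk =>
    intro n
    induction n with
    | zero => intro G S hn hk; omega
    | succ n ihn =>
      intro G S hn hk hA
      have hn4 : 4 * k + 3 ≤ #S := by
        have := degSum_le G S
        have hpos : 0 < #S := by omega
        have h : (4 * k + 3) * #S ≤ #S * #S := by nlinarith
        exact Nat.le_of_mul_le_mul_right h hpos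
      obtain ⟨v, hv, hmin⟩ := Finset.exists_min_image S (degIn G S)
        (Finset.card_pos.1 (by omega))
      have hcv := Finset.card_erase_of_mem hv
      rcases Nat.eq_zero_or_pos (degIn G S v) with h0 | hpos
      · have e := degSum_erase G hv
        refine (ihn G (S.erase v) (by omega) (by omega) ?_).mono (Finset.erase_subset _ _)
        rw [hcv, hn] at *
        simp only [Nat.add_sub_cancel] at *
        nlinarith
      obtain ⟨u, hu⟩ := Finset.card_pos.1 hpos
      obtain ⟨hu, hvu⟩ := Finset.mem_filter.1 hu
      by_cases hno : ∀ w ∈ S, ¬ (G.Adj u w ∧ G.Adj v w)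
      · have e := degSum_contract hu hv hvu.symm hno
        refine HasTriangles.of_contract hv hvu.symm
          (ihn _ (S.erase v) (by omega) (by omega) ?_)
        rw [hcv, hn] at *
        simp only [Nat.add_sub_cancel] at *
        nlinarith
      push Not at hno
      obtain ⟨w, hw, huw, hvw⟩ := hno
      have hu' : u ∈ S.erase v := Finset.mem_erase.2 ⟨hvu.ne', hu⟩
      have hw' : w ∈ (S.erase v).erase u :=
        Finset.mem_erase.2 ⟨huw.ne', Finset.mem_erase.2 ⟨hvw.ne', hw⟩⟩
      have hcu := Finset.card_erase_of_mem hu'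
      have hcw := Finset.card_erase_of_mem hw'
      have e1 := degSum_erase G hv
      have e2 := degSum_erase G hu'
      have e3 := degSum_erase G hw'
      have b2 := degIn_le_card_sub_one G hu'
      have b3 := degIn_le_card_sub_one G hw'
      refine HasTriangles.add_triangle hv hu hw hvu hvw huw
        (ihk (n - 2) G _ (by omega) (by omega) ?_)
      have hsum : #S * degIn G S v ≤ degSum G S := by
        simpa [degSum] using Finset.card_nsmul_le_sum S (degIn G S) _ hmin
      obtain ⟨m, rfl⟩ : ∃ m, n = m + 2 := ⟨n - 2, by omega⟩
      have hcard : #(((S.erase v).erase u).erase w) = m := by omega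
      rw [hcard]
      rw [hn] at hsum hA
      have b2' : degIn G (S.erase v) u ≤ m + 1 := by omega
      have b3' : degIn G ((S.erase v).erase u) w ≤ m := by omega
      have hm : 4 * k ≤ m := by omega
      -- the degree of `v` is bounded either absolutely or by the average degree
      rcases Nat.le_total (degIn G S v) (4 * k + 2) with hd | hd
      · nlinarith
      · obtain ⟨e, he⟩ := Nat.exists_eq_add_of_le hd
        rw [he] at hsum e1
        nlinarith [Nat.zero_le (m * e)]

theorem isMinorOf_of_averageDegree (k : ℕ) (V : Type) [Fintype V] [Nonempty V]
    (G : SimpleGraph V) (h : (4 * k - 2 : ℝ) ≤ G.averageDegree) :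
    (disjointTriangles k).IsMinorOf G := by
  classical
  have hsum : degSum G univ = 2 * G.edgeSet.ncard := by
    rw [← SimpleGraph.coe_edgeFinset, Set.ncard_coe_finset,
      ← SimpleGraph.sum_degrees_eq_twice_card_edges]
    refine Finset.sum_congr rfl fun x _ => ?_
    rw [degIn, ← SimpleGraph.card_neighborFinset_eq_degree,
      SimpleGraph.neighborFinset_eq_filter]
  have hpos : 0 < Fintype.card V := Fintype.card_pos
  have hA : 4 * k * #(univ : Finset V) ≤ degSum G univ + 2 * #(univ : Finset V) := by
    rw [hsum, Finset.card_univ]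
    rw [SimpleGraph.averageDegree, Nat.card_eq_fintype_card,
      le_div_iff₀ (by exact_mod_cast hpos)] at h
    have : (4 * k * Fintype.card V : ℝ) ≤ 2 * G.edgeSet.ncard + 2 * Fintype.card V := by
      linarith
    exact_mod_cast this
  have hcard : k ≤ #(univ : Finset V) := by
    have := degSum_le G univ
    rw [Finset.card_univ] at *
    nlinarith
  obtain ⟨B, -, h2, h3, h4⟩ := hasTriangles_of_dense k _ G univ rfl hcard hA
  refine ⟨fun w => B w.1 w.2, fun w => h2 _ _, fun w w' hne => h3 _ _ _ _ hne, ?_⟩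
  rintro ⟨i, j⟩ ⟨i', j'⟩ hadj
  rw [disjointTriangles, SimpleGraph.fromRel_adj] at hadj
  obtain ⟨hne, hi⟩ := hadj
  obtain rfl : i = i' := by
    rcases hi with hi | hi
    · exact hi
    · exact hi.symm
  exact h4 i j j' fun hj => hne (by rw [hj])

/-! ### The lower bound -/

/-- `K_{c,N}` has no `k` disjoint triangles as a minor if `c < 2 * k`. -/
theorem not_isMinorOf_completeBipartite {k c N : ℕ} (hc : c < 2 * k) :
    ¬ (disjointTriangles k).IsMinorOf (completeBipartiteGraph (Fin c) (Fin N)) := by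
  rintro ⟨B, -, hdisj, hadj⟩
  -- among two branch sets of one triangle, at least one meets the left side
  have hor : ∀ i j j', j ≠ j' →
      (∃ a, Sum.inl a ∈ B (i, j)) ∨ ∃ a, Sum.inl a ∈ B (i, j') := by
    intro i j j' hne
    have : (disjointTriangles k).Adj (i, j) (i, j') := by
      simp [disjointTriangles, hne]
    obtain ⟨x, hx, y, hy, hxy⟩ := hadj this
    rcases x with a | a
    · exact Or.inl ⟨a, hx⟩
    · rcases y with b | b
      · exact Or.inr ⟨b, hy⟩
      · simp at hxy
  have hex : ∀ i, ∃ j₀, ∀ j, j ≠ j₀ → ∃ a, Sum.inl a ∈ B (i, j) := by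
    intro i
    by_cases h : ∃ j₀, ¬ ∃ a, Sum.inl a ∈ B (i, j₀)
    · obtain ⟨j₀, h⟩ := h
      exact ⟨j₀, fun j hj => (hor i j j₀ hj).resolve_right h⟩
    · exact ⟨0, fun j _ => by_contra fun hj => h ⟨j, hj⟩⟩
  choose j₀ hj₀ using hex
  choose f hf using fun p : Fin k × Fin 2 =>
    hj₀ p.1 ((j₀ p.1).succAbove p.2) (Fin.succAbove_ne _ _)
  have hinj : Function.Injective f := by
    rintro ⟨i, t⟩ ⟨i', t'⟩ h
    have h1 := hf (i, t)
    have h2 := hf (i', t')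
    rw [← h] at h2
    have heq : (i, (j₀ i).succAbove t) = (i', (j₀ i').succAbove t') := by
      by_contra hne
      exact Set.disjoint_left.1 (hdisj hne) h1 h2
    obtain ⟨rfl, ht⟩ := Prod.mk.inj heq
    rw [Fin.succAbove_right_injective ht]
  have := Fintype.card_le_of_injective f hinj
  simp at this
  omega

theorem le_ncard_edgeSet_completeBipartite (c N : ℕ) :
    c * N ≤ (completeBipartiteGraph (Fin c) (Fin N)).edgeSet.ncard := by
  let f : Fin c × Fin N → Sym2 (Fin c ⊕ Fin N) := fun p => s(Sum.inl p.1, Sum.inr p.2)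
  have hinj : Function.Injective f := by
    rintro ⟨a, b⟩ ⟨a', b'⟩ h
    simpa [f] using h
  have hsub : Set.range f ⊆ (completeBipartiteGraph (Fin c) (Fin N)).edgeSet := by
    rintro _ ⟨p, rfl⟩
    simp [f]
  have := Set.ncard_le_ncard hsub (Set.toFinite _)
  rwa [← Set.image_univ, Set.ncard_image_of_injective _ hinj, Set.ncard_univ,
    Nat.card_eq_fintype_card, Fintype.card_prod, Fintype.card_fin, Fintype.card_fin] at this

theorem exists_no_minor (k : ℕ) (hk : 1 ≤ k) (d : ℝ) (hd : d < 4 * k - 2) :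
    ∃ (V : Type) (_ : Fintype V) (_ : Nonempty V) (G : SimpleGraph V),
      d ≤ G.averageDegree ∧ ¬ (disjointTriangles k).IsMinorOf G := by
  obtain ⟨c, hc⟩ : ∃ c, c + 1 = 2 * k := ⟨2 * k - 1, by omega⟩
  have hcR : (c : ℝ) + 1 = 2 * k := by exact_mod_cast hc
  have hgap : 0 < 2 * (c : ℝ) - d := by linarith
  -- the average degree `2 * c * N / (c + N)` reaches `d` once `N * (2 * c - d) ≥ d * c`
  obtain ⟨N, hN⟩ := exists_nat_ge (d * c / (2 * c - d))
  rw [div_le_iff₀ hgap] at hN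
  have hcpos : 0 < c := by omega
  refine ⟨Fin c ⊕ Fin N, inferInstance, ⟨Sum.inl ⟨0, hcpos⟩⟩, completeBipartiteGraph _ _, ?_,
    not_isMinorOf_completeBipartite (by omega)⟩
  have hE : ((c * N : ℕ) : ℝ) ≤ (completeBipartiteGraph (Fin c) (Fin N)).edgeSet.ncard := by
    exact_mod_cast le_ncard_edgeSet_completeBipartite c N
  have hcard : (Nat.card (Fin c ⊕ Fin N) : ℝ) = c + N := by simp
  have hcR' : (0 : ℝ) < c := by exact_mod_cast hcpos
  rw [SimpleGraph.averageDegree, hcard, le_div_iff₀ (by positivity)]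
  push_cast at hE
  nlinarith

end DisjointTriangles

/-- For every `k ≥ 1`: every graph with average degree at least `4k − 2` contains the
disjoint union of `k` triangles as a minor; for every `d < 4k − 2` some graph with average
degree at least `d` has no such minor; hence `f(H) = 4k − 2`, i.e. `4k − 2` is the
infimum of all `d` such that average degree at least `d` forces the minor. -/
theorem disjoint_triangles_extremal (k : ℕ) (hk : 1 ≤ k) :
    (∀ (V : Type) [Fintype V] [Nonempty V] (G : SimpleGraph V),
      (4 * k - 2 : ℝ) ≤ G.averageDegree → (disjointTriangles k).IsMinorOf G) ∧
    (∀ d : ℝ, d < 4 * k - 2 →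
      ∃ (V : Type) (_ : Fintype V) (_ : Nonempty V) (G : SimpleGraph V),
        d ≤ G.averageDegree ∧ ¬ (disjointTriangles k).IsMinorOf G) ∧
    IsGLB {d : ℝ | ∀ (V : Type) (_ : Fintype V) (_ : Nonempty V) (G : SimpleGraph V),
        d ≤ G.averageDegree → (disjointTriangles k).IsMinorOf G} (4 * k - 2 : ℝ) := by
  refine ⟨DisjointTriangles.isMinorOf_of_averageDegree k,
    DisjointTriangles.exists_no_minor k hk, ?_, ?_⟩
  · intro d hd
    by_contra! hlt
    obtain ⟨V, hV, hV', G, hG, hno⟩ := DisjointTriangles.exists_no_minor k hk d hlt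
    exact hno (hd V hV hV' G hG)
  · intro b hb
    exact hb fun V _ _ G hG => DisjointTriangles.isMinorOf_of_averageDegree k V G hG
end
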